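/- arXiv:1802.03437 — 2 statements merged into one kernel-verified Lean document; each statement's English description precedes it below -/
import Mathlib

section
/- Let Q be a primitive positive-definite quaternary integer-valued quadratic form with discriminant D(Q), and let n be a positive integer. If there exists x ∈ ℤ_2⁴ with Q(x) = n and x ∉ 2·ℤ_2⁴ (i.e. n is primitively represented by Q over ℤ_2), then the local density β_2(Q;n) exists and satisfies β_2(Q;n) ≥ (1/16) · 2^(−⌊(ord_2(D(Q)) + 1)/2⌋), where ord_2 denotes the 2-adic valuation. -/
open scoped BigOperators

/-- Value of the quadratic form with Gram matrix `A` (symmetric, even diagonal)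
over any commutative ring: `Q(x) = ∑ (aᵢᵢ/2) xᵢ² + ∑_{i<j} aᵢⱼ xᵢ xⱼ`. -/
def Qval {R : Type*} [CommRing R] (A : Matrix (Fin 4) (Fin 4) ℤ) (x : Fin 4 → R) : R :=
  (∑ i, ((A i i / 2 : ℤ) : R) * x i ^ 2) +
    ∑ i, ∑ j ∈ Finset.Ioi i, ((A i j : ℤ) : R) * (x i * x j)

/-- `A` is the Gram matrix of an integer-valued quadratic form. -/
def IsGram (A : Matrix (Fin 4) (Fin 4) ℤ) : Prop :=
  A.IsSymm ∧ ∀ i, 2 ∣ A i i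

/-- The form is primitive: the gcd of its coefficients is 1. -/
def IsPrimitiveQF (A : Matrix (Fin 4) (Fin 4) ℤ) : Prop :=
  ∀ d : ℤ, (∀ i, d ∣ A i i / 2) → (∀ i j, i ≠ j → d ∣ A i j) → IsUnit d

/-- The form is positive definite. -/
def PosDefQF (A : Matrix (Fin 4) (Fin 4) ℤ) : Prop :=
  (A.map (Int.cast : ℤ → ℝ)).PosDef

/-- `N` is the level of the form with Gram matrix `A`: the smallest positive integer
such that `N • A⁻¹` has integer entries and even diagonal. -/
def IsLevel (A : Matrix (Fin 4) (Fin 4) ℤ) (N : ℕ) : Prop :=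
  0 < N ∧
    (∃ B : Matrix (Fin 4) (Fin 4) ℤ,
      B.map (Int.cast : ℤ → ℚ) = (N : ℚ) • (A.map (Int.cast : ℤ → ℚ))⁻¹ ∧ ∀ i, 2 ∣ B i i) ∧
    ∀ M : ℕ, 0 < M →
      (∃ B : Matrix (Fin 4) (Fin 4) ℤ,
        B.map (Int.cast : ℤ → ℚ) = (M : ℚ) • (A.map (Int.cast : ℤ → ℚ))⁻¹ ∧ ∀ i, 2 ∣ B i i) →
      N ≤ M

/-- `n` is represented by the form over `ℤ`. -/
def Represented (A : Matrix (Fin 4) (Fin 4) ℤ) (n : ℕ) : Prop :=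
  ∃ x : Fin 4 → ℤ, Qval A x = (n : ℤ)

/-- `n` is locally represented: representable over `ℤ_p` for every prime `p`. -/
def LocallyRepresented (A : Matrix (Fin 4) (Fin 4) ℤ) (n : ℕ) : Prop :=
  ∀ (p : ℕ) [Fact p.Prime], ∃ x : Fin 4 → ℤ_[p], Qval A x = (n : ℤ_[p])

/-- Number of solutions of `Q(x) ≡ n mod p^k`. -/
noncomputable def localCount (A : Matrix (Fin 4) (Fin 4) ℤ) (p n k : ℕ) : ℕ :=
  Nat.card {x : Fin 4 → ZMod (p ^ k) // Qval A x = (n : ZMod (p ^ k))}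

/-- The local density `β_p(Q;n)` exists and is at least `c`. -/
def DensityBound (A : Matrix (Fin 4) (Fin 4) ℤ) (p n : ℕ) (c : ℝ) : Prop :=
  ∃ β : ℝ,
    Filter.Tendsto (fun k => (localCount A p n k : ℝ) / (p : ℝ) ^ (3 * k))
      Filter.atTop (nhds β) ∧ c ≤ β



namespace LD

/-- integer representatives of a vector of residues -/
def lft {k : ℕ} (x : Fin 4 → ZMod (2 ^ k)) : Fin 4 → ℤ := fun i => ((x i).val : ℤ)

/-- reduction of an integer vector -/
def prj (k : ℕ) (x : Fin 4 → ℤ) : Fin 4 → ZMod (2 ^ k) := fun i => (x i : ZMod (2 ^ k))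

/-- number of classes mod `2^k` satisfying a predicate -/
noncomputable def cnt (k : ℕ) (P : (Fin 4 → ℤ) → Prop) : ℕ :=
  Nat.card {x : Fin 4 → ZMod (2 ^ k) // P (lft x)}

/-- periodicity of a predicate -/
def Per (k : ℕ) (P : (Fin 4 → ℤ) → Prop) : Prop :=
  ∀ x v, P x → P (x + (2 ^ k : ℤ) • v)

lemma prj_lft {k : ℕ} (x : Fin 4 → ZMod (2 ^ k)) : prj k (lft x) = x := by
  funext i
  simp [prj, lft]

lemma prj_eq_iff {k : ℕ} {x y : Fin 4 → ℤ} :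
    prj k x = prj k y ↔ ∃ w : Fin 4 → ℤ, x = y + (2 ^ k : ℤ) • w := by
  constructor
  · intro h
    have h1 : ∀ i, ∃ w : ℤ, x i = y i + 2 ^ k * w := by
      intro i
      have := congrFun h i
      simp only [prj] at this
      have h2 := (ZMod.intCast_eq_intCast_iff_dvd_sub (y i) (x i) (2 ^ k)).1 this.symm
      obtain ⟨w, hw⟩ := h2
      refine ⟨w, ?_⟩
      push_cast at hw
      linarith
    choose w hw using h1
    refine ⟨w, ?_⟩
    funext i
    simp [hw i]
  · rintro ⟨w, rfl⟩
    funext i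
    have : ((2 : ZMod (2 ^ k)) ^ k) = 0 := by
      have := ZMod.natCast_self (2 ^ k)
      push_cast at this
      exact this
    simp [prj, this]

lemma lft_prj (k : ℕ) (x : Fin 4 → ℤ) : ∃ w : Fin 4 → ℤ, lft (prj k x) = x + (2 ^ k : ℤ) • w :=
  prj_eq_iff.1 (prj_lft _)

lemma lft_inj {k : ℕ} {x y : Fin 4 → ZMod (2 ^ k)} (h : lft x = lft y) : x = y := by
  rw [← prj_lft x, h, prj_lft]

lemma Per.of_eq {k : ℕ} {P : (Fin 4 → ℤ) → Prop} (h : Per k P) {x y : Fin 4 → ℤ}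
    (hx : P x) (e : prj k y = prj k x) : P y := by
  obtain ⟨w, rfl⟩ := prj_eq_iff.1 e
  exact h _ _ hx

lemma Per.prj {k : ℕ} {P : (Fin 4 → ℤ) → Prop} (h : Per k P) {x : Fin 4 → ℤ} (hx : P x) :
    P (lft (LD.prj k x)) := h.of_eq hx (prj_lft _)

lemma Per.not {k : ℕ} {P : (Fin 4 → ℤ) → Prop} (h : Per k P) : Per k (fun x => ¬ P x) := by
  intro x v hx hc
  apply hx
  have := h _ (-v) hc
  simpa using this

lemma Per.and {k : ℕ} {P R : (Fin 4 → ℤ) → Prop} (h : Per k P) (h' : Per k R) :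
    Per k (fun x => P x ∧ R x) := fun x v hx => ⟨h x v hx.1, h' x v hx.2⟩

lemma Per.mono {k l : ℕ} {P : (Fin 4 → ℤ) → Prop} (h : Per k P) (hl : k ≤ l) : Per l P := by
  intro x v hx
  have := h x ((2 ^ (l - k) : ℤ) • v) hx
  rw [smul_smul, ← pow_add] at this
  rwa [Nat.add_sub_cancel' hl] at this

lemma cnt_mono {k : ℕ} {P R : (Fin 4 → ℤ) → Prop} (h : ∀ x, P x → R x) : cnt k P ≤ cnt k R := by
  refine Nat.card_le_card_of_injective (fun x => ⟨x.1, h _ x.2⟩) ?_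
  intro x y hxy
  simpa [Subtype.ext_iff] using hxy

lemma cnt_congr {k : ℕ} {P R : (Fin 4 → ℤ) → Prop} (h : ∀ x, P x ↔ R x) : cnt k P = cnt k R :=
  le_antisymm (cnt_mono fun x => (h x).1) (cnt_mono fun x => (h x).2)

lemma cnt_split {k : ℕ} (P R : (Fin 4 → ℤ) → Prop) :
    cnt k P = cnt k (fun x => P x ∧ R x) + cnt k (fun x => P x ∧ ¬ R x) := by
  classical
  unfold cnt
  rw [Nat.card_eq_fintype_card, Nat.card_eq_fintype_card, Nat.card_eq_fintype_card,
    Fintype.card_subtype, Fintype.card_subtype, Fintype.card_subtype,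
    ← Finset.card_filter_add_card_filter_not (s := {x | P (lft x)}) (fun x => R (lft x)),
    Finset.filter_filter, Finset.filter_filter]

lemma cnt_pos {k : ℕ} {P : (Fin 4 → ℤ) → Prop} (h : Per k P) {x : Fin 4 → ℤ} (hx : P x) :
    1 ≤ cnt k P := by
  have : Nonempty {x : Fin 4 → ZMod (2 ^ k) // P (lft x)} := ⟨⟨prj k x, h.prj hx⟩⟩
  exact Nat.card_pos

lemma cnt_shift_le {k : ℕ} {P R : (Fin 4 → ℤ) → Prop} (hR : Per k R)
    (v : (Fin 4 → ℤ) → (Fin 4 → ℤ)) (hv : ∀ x w, v (x + (2 ^ k : ℤ) • w) = v x)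
    (hvv : ∀ x, P x → v (x + v x) = v x) (hPR : ∀ x, P x → R (x + v x)) :
    cnt k P ≤ cnt k R := by
  refine Nat.card_le_card_of_injective
    (fun x => ⟨prj k (lft x.1 + v (lft x.1)), hR.prj (hPR _ x.2)⟩) ?_
  rintro ⟨x, hx⟩ ⟨y, hy⟩ hxy
  simp only [Subtype.mk.injEq] at hxy ⊢
  obtain ⟨w, hw⟩ := prj_eq_iff.1 hxy
  have h1 : v (lft x) = v (lft y) := by
    rw [← hvv _ hx, hw, hv, hvv _ hy]
  rw [← prj_lft x, ← prj_lft y, prj_eq_iff]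
  refine ⟨w, ?_⟩
  rw [h1] at hw
  have : lft x = (lft y + v (lft y) + (2 ^ k : ℤ) • w) - v (lft y) := by rw [← hw]; abel
  rw [this]; abel

lemma lft_bd {k : ℕ} (x : Fin 4 → ZMod (2 ^ k)) (i : Fin 4) :
    0 ≤ lft x i ∧ lft x i < 2 ^ k := by
  refine ⟨Int.natCast_nonneg _, ?_⟩
  have := ZMod.val_lt (x i)
  simp only [lft]
  exact_mod_cast this

lemma cnt_succ {k : ℕ} {P : (Fin 4 → ℤ) → Prop} (h : Per k P) :
    cnt (k + 1) P = 16 * cnt k P := by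
  have hc : 16 * cnt k P = Nat.card ({x : Fin 4 → ZMod (2 ^ k) // P (lft x)} × (Fin 4 → Fin 2)) := by
    rw [Nat.card_prod, cnt, mul_comm]
    simp
  rw [hc]
  have hp : (0 : ℤ) < 2 ^ k := by positivity
  apply le_antisymm
  · refine Nat.card_le_card_of_injective
      (fun x => (⟨prj k (lft x.1), h.prj x.2⟩, fun i => ⟨(x.1 i).val / 2 ^ k, ?_⟩)) ?_
    · rw [Nat.div_lt_iff_lt_mul (by positivity), mul_comm, ← pow_succ]
      exact ZMod.val_lt _
    · rintro ⟨x, hx⟩ ⟨y, hy⟩ hxy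
      simp only [Prod.mk.injEq, Subtype.mk.injEq] at hxy ⊢
      obtain ⟨h1, h2⟩ := hxy
      obtain ⟨w, hw⟩ := prj_eq_iff.1 h1
      apply lft_inj
      funext i
      have h3 := congrFun h2 i
      simp only [Fin.mk.injEq] at h3
      have h4 : lft x i / 2 ^ k = lft y i / 2 ^ k := by
        simp only [lft]; exact_mod_cast h3
      have h5 := congrFun hw i
      simp only [Pi.add_apply, Pi.smul_apply, smul_eq_mul] at h5
      rw [h5, Int.add_mul_ediv_left _ _ hp.ne'] at h4
      have : w i = 0 := by linarith
      rw [h5, this]; ring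
  · refine Nat.card_le_card_of_injective
      (fun x => ⟨prj (k + 1) (lft x.1.1 + (2 ^ k : ℤ) • (fun i => ((x.2 i : ℕ) : ℤ))),
        (h.mono (Nat.le_succ k)).prj (h _ _ x.1.2)⟩) ?_
    rintro ⟨⟨x, hx⟩, b⟩ ⟨⟨y, hy⟩, c⟩ hxy
    simp only [Subtype.mk.injEq] at hxy
    obtain ⟨w, hw⟩ := prj_eq_iff.1 hxy
    have key : ∀ i, lft x i = lft y i ∧ b i = c i := by
      intro i
      have h5 := congrFun hw i
      simp only [Pi.add_apply, Pi.smul_apply, smul_eq_mul, pow_succ] at h5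
      have hx := lft_bd x i
      have hy := lft_bd y i
      have hb := (b i).2
      have hcc := (c i).2
      have h6 : (((b i : ℕ) : ℤ) - ((c i : ℕ) : ℤ) - 2 * w i) = 0 := by
        have : lft x i - lft y i = 2 ^ k * (-(((b i : ℕ) : ℤ) - ((c i : ℕ) : ℤ) - 2 * w i)) := by
          linarith
        have h7 : -(((b i : ℕ) : ℤ) - ((c i : ℕ) : ℤ) - 2 * w i) < 1 := by
          by_contra hh
          push Not at hh
          nlinarith
        have h8 : -1 < -(((b i : ℕ) : ℤ) - ((c i : ℕ) : ℤ) - 2 * w i) := by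
          by_contra hh
          push Not at hh
          nlinarith
        omega
      have h9 : (b i : ℕ) = (c i : ℕ) := by omega
      have h10 : w i = 0 := by omega
      refine ⟨?_, Fin.ext h9⟩
      rw [h9, h10] at h5
      linarith
    simp only [Prod.mk.injEq, Subtype.mk.injEq]
    exact ⟨lft_inj (funext fun i => (key i).1), funext fun i => (key i).2⟩

lemma cnt_add {k : ℕ} {P : (Fin 4 → ℤ) → Prop} (h : Per k P) (m : ℕ) :
    cnt (k + m) P = 16 ^ m * cnt k P := by
  induction m with
  | zero => simp
  | succ m ih => rw [← add_assoc, cnt_succ (h.mono (by omega)), ih]; ring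

/-- the index two sublattice `{x : ℓ ⬝ x even}` -/
lemma exists_T (l : Fin 4 → ℤ) (hl : ∃ j, ¬ 2 ∣ l j) :
    ∃ T : Matrix (Fin 4) (Fin 4) ℤ, T.det = 2 ∧ (∀ y, 2 ∣ l ⬝ᵥ T.mulVec y) ∧
      (∀ x, 2 ∣ l ⬝ᵥ x → ∃ y, T.mulVec y = x) ∧
      ∀ k P, Per k P → cnt k (fun y => P (T.mulVec y)) ≤ 2 * cnt k P := by
  obtain ⟨j, hj⟩ := hl
  set S : (Fin 4 → ℤ) → ℤ := fun y => ∑ i ∈ Finset.univ.erase j, l i * y i with hS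
  let T : Matrix (Fin 4) (Fin 4) ℤ := (1 : Matrix (Fin 4) (Fin 4) ℤ).updateRow j (Function.update l j 2)
  have hTj : ∀ y, T.mulVec y j = 2 * y j + S y := by
    intro y
    simp only [T, Matrix.mulVec, dotProduct, Matrix.updateRow_self, hS]
    rw [← Finset.add_sum_erase _ _ (Finset.mem_univ j)]
    congr 1
    · simp
    · refine Finset.sum_congr rfl fun i hi => ?_
      rw [Function.update_of_ne (Finset.ne_of_mem_erase hi)]
  have hTi : ∀ y i, i ≠ j → T.mulVec y i = y i := by
    intro y i hi
    simp [T, Matrix.mulVec, dotProduct, Matrix.updateRow_ne hi, Matrix.one_apply]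
  have hdot : ∀ x : Fin 4 → ℤ, l ⬝ᵥ x = l j * x j + S x := by
    intro x
    simp only [dotProduct, hS]
    rw [← Finset.add_sum_erase _ _ (Finset.mem_univ j)]
  have hSc : ∀ x y : Fin 4 → ℤ, (∀ i, i ≠ j → x i = y i) → S x = S y := by
    intro x y h
    exact Finset.sum_congr rfl fun i hi => by rw [h i (Finset.ne_of_mem_erase hi)]
  obtain ⟨r, hr⟩ : ∃ r, l j = 2 * r + 1 := by
    exact ⟨l j / 2, by omega⟩
  refine ⟨T, ?_, ?_, ?_, ?_⟩
  · have : T.det = (Matrix.cramer (1 : Matrix (Fin 4) (Fin 4) ℤ) (Function.update l j 2)) j := by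
      rw [Matrix.cramer_apply, ← Matrix.det_transpose T]
      simp only [T, ← Matrix.updateCol_transpose, Matrix.transpose_one]
    rw [this]
    simp
  · intro y
    rw [hdot, hTj, hSc _ y (hTi y), hr]
    exact ⟨(2 * r + 1) * y j + (r + 1) * S y, by ring⟩
  · intro x hx
    rw [hdot, hr] at hx
    obtain ⟨t, ht⟩ := hx
    refine ⟨Function.update x j (t - r * x j - S x), ?_⟩
    funext i
    by_cases hi : i = j
    · subst hi
      rw [hTj, hSc (Function.update x i _) x (fun m hm => Function.update_of_ne hm _ _),
        Function.update_self]
      linarith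
    · rw [hTi _ _ hi, Function.update_of_ne hi]
  · intro k P hP
    have hc : 2 * cnt k P = Nat.card ({x : Fin 4 → ZMod (2 ^ k) // P (lft x)} × Fin 2) := by
      rw [Nat.card_prod, cnt, mul_comm]
      simp
    rw [hc]
    refine Nat.card_le_card_of_injective
      (fun y => (⟨prj k (T.mulVec (lft y.1)), hP.prj y.2⟩, ⟨2 * (y.1 j).val / 2 ^ k, ?_⟩)) ?_
    · rw [Nat.div_lt_iff_lt_mul (by positivity)]
      exact Nat.mul_lt_mul_of_pos_left (ZMod.val_lt _) (by norm_num)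
    · rintro ⟨x, hx⟩ ⟨y, hy⟩ hxy
      simp only [Prod.mk.injEq, Subtype.mk.injEq, Fin.mk.injEq] at hxy ⊢
      obtain ⟨h1, h2⟩ := hxy
      obtain ⟨w, hw⟩ := prj_eq_iff.1 h1
      have hp : (0 : ℤ) < 2 ^ k := by positivity
      have h3 : ∀ i, i ≠ j → lft x i = lft y i := by
        intro i hi
        have h5 := congrFun hw i
        simp only [Pi.add_apply, Pi.smul_apply, smul_eq_mul, hTi _ _ hi] at h5
        have hx := lft_bd x i
        have hy := lft_bd y i
        have : w i = 0 := by
          have h7 : w i < 1 := by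
            by_contra hh
            push Not at hh
            nlinarith
          have h8 : -1 < w i := by
            by_contra hh
            push Not at hh
            nlinarith
          omega
        rw [h5, this]; ring
      have h4 : 2 * lft x j / 2 ^ k = 2 * lft y j / 2 ^ k := by
        simp only [lft]; exact_mod_cast h2
      have h5 := congrFun hw j
      simp only [Pi.add_apply, Pi.smul_apply, smul_eq_mul, hTj] at h5
      rw [hSc _ _ h3] at h5
      have h6 : 2 * lft x j = 2 * lft y j + 2 ^ k * w j := by linarith
      rw [h6, Int.add_mul_ediv_left _ _ hp.ne'] at h4
      have h7 : w j = 0 := by linarith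
      rw [h7] at h6
      apply lft_inj
      funext i
      by_cases hi : i = j
      · subst hi; linarith
      · exact h3 i hi

end LD

namespace LD

open Matrix

/-- `q` is the quadratic form with Gram matrix `A` -/
def IsQ (A : Matrix (Fin 4) (Fin 4) ℤ) (q : (Fin 4 → ℤ) → ℤ) : Prop :=
  A.IsSymm ∧ ∀ x, 2 * q x = x ⬝ᵥ A *ᵥ x

variable {A : Matrix (Fin 4) (Fin 4) ℤ} {q : (Fin 4 → ℤ) → ℤ}

lemma dot_symm (hA : A.IsSymm) (x y : Fin 4 → ℤ) : x ⬝ᵥ A *ᵥ y = y ⬝ᵥ A *ᵥ x := by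
  rw [dotProduct_mulVec, ← mulVec_transpose, hA.eq, dotProduct_comm]

lemma IsQ.add (h : IsQ A q) (x y : Fin 4 → ℤ) : q (x + y) = q x + q y + y ⬝ᵥ A *ᵥ x := by
  have h1 := h.2 (x + y)
  rw [mulVec_add, dotProduct_add, add_dotProduct, add_dotProduct, ← h.2, ← h.2,
    dot_symm h.1 x y] at h1
  linarith

lemma IsQ.smul (h : IsQ A q) (c : ℤ) (x : Fin 4 → ℤ) : q (c • x) = c ^ 2 * q x := by
  have h1 := h.2 (c • x)
  rw [mulVec_smul, dotProduct_smul, smul_dotProduct, ← h.2] at h1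
  simp only [smul_eq_mul] at h1
  linarith

lemma IsQ.add_smul (h : IsQ A q) (x v : Fin 4 → ℤ) (c : ℤ) :
    q (x + c • v) = q x + c * (v ⬝ᵥ A *ᵥ x) + c ^ 2 * q v := by
  rw [h.add, h.smul, smul_dotProduct]
  simp only [smul_eq_mul]
  ring

/-- congruence `q x ≡ n` mod `2^k` -/
def U (q : (Fin 4 → ℤ) → ℤ) (n : ℤ) (k : ℕ) : (Fin 4 → ℤ) → Prop := fun x => (2 ^ k : ℤ) ∣ q x - n

lemma IsQ.per (h : IsQ A q) (n : ℤ) (k : ℕ) : Per k (U q n k) := by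
  intro x v hx
  unfold U at *
  rw [h.add_smul]
  have : q x + 2 ^ k * (v ⬝ᵥ A *ᵥ x) + (2 ^ k) ^ 2 * q v - n
    = (q x - n) + 2 ^ k * ((v ⬝ᵥ A *ᵥ x) + 2 ^ k * q v) := by ring
  rw [this]
  exact dvd_add hx (dvd_mul_right _ _)

lemma U_succ {n : ℤ} {k : ℕ} {x : Fin 4 → ℤ} (h : U q n (k + 1) x) : U q n k x :=
  (pow_dvd_pow 2 (Nat.le_succ k)).trans h

/-- one Hensel step -/
lemma hensel_step (h : IsQ A q) (n : ℤ) (k : ℕ) (W : (Fin 4 → ℤ) → Prop) (hW : Per k W)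
    (v : (Fin 4 → ℤ) → (Fin 4 → ℤ)) (hv : ∀ x w, v (x + (2 ^ (k + 1) : ℤ) • w) = v x)
    (hs : ∀ s : ℤ, (s = 1 ∨ s = -1) → ∀ x, W x → U q n k x →
      W (x + s • v x) ∧ v (x + s • v x) = v x ∧
        (2 ^ (k + 1) : ℤ) ∣ q (x + s • v x) - q x - 2 ^ k) :
    cnt (k + 1) (fun x => W x ∧ U q n (k + 1) x) = 8 * cnt k (fun x => W x ∧ U q n k x) := by
  have hU := h.per n k
  have hU1 := h.per n (k + 1)
  have e1 := cnt_succ (hW.and hU)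
  rw [cnt_split _ (U q n (k + 1))] at e1
  have e2 : cnt (k + 1) (fun x => (W x ∧ U q n k x) ∧ U q n (k + 1) x)
      = cnt (k + 1) (fun x => W x ∧ U q n (k + 1) x) :=
    cnt_congr fun x => ⟨fun hx => ⟨hx.1.1, hx.2⟩, fun hx => ⟨⟨hx.1, U_succ hx.2⟩, hx.2⟩⟩
  have hper : Per (k + 1) (fun x => (W x ∧ U q n k x) ∧ U q n (k + 1) x) :=
    ((hW.and hU).mono (Nat.le_succ k)).and hU1
  have hper' : Per (k + 1) (fun x => (W x ∧ U q n k x) ∧ ¬ U q n (k + 1) x) :=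
    ((hW.and hU).mono (Nat.le_succ k)).and hU1.not
  have key : ∀ s : ℤ, (s = 1 ∨ s = -1) → ∀ x, W x → U q n k x →
      U q n k (x + s • v x) ∧ (U q n (k + 1) (x + s • v x) ↔ ¬ U q n (k + 1) x) := by
    intro s hs1 x hx hx'
    obtain ⟨-, -, t, ht⟩ := hs s hs1 x hx hx'
    obtain ⟨a, ha⟩ := hx'
    have e : q (x + s • v x) - n = 2 ^ k * (a + 2 * t + 1) := by
      rw [pow_succ] at ht; linear_combination ht + ha
    have hp : (2 ^ k : ℤ) ≠ 0 := by positivity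
    unfold U
    rw [e, ha, pow_succ, mul_dvd_mul_iff_left hp, mul_dvd_mul_iff_left hp]
    exact ⟨dvd_mul_right _ _, by omega⟩
  have e3 : cnt (k + 1) (fun x => (W x ∧ U q n k x) ∧ U q n (k + 1) x)
      = cnt (k + 1) (fun x => (W x ∧ U q n k x) ∧ ¬ U q n (k + 1) x) := by
    apply le_antisymm
    · refine cnt_shift_le hper' v hv ?_ ?_
      · rintro x ⟨⟨h1, h2⟩, -⟩
        simpa using (hs 1 (Or.inl rfl) x h1 h2).2.1
      · rintro x ⟨⟨h1, h2⟩, h3⟩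
        have a1 := hs 1 (Or.inl rfl) x h1 h2
        have a2 := key 1 (Or.inl rfl) x h1 h2
        rw [one_smul] at a1 a2
        exact ⟨⟨a1.1, a2.1⟩, fun hc => a2.2.1 hc h3⟩
    · refine cnt_shift_le hper (fun x => - v x) (fun x w => by simp only [hv]) ?_ ?_
      · rintro x ⟨⟨h1, h2⟩, -⟩
        have := (hs (-1) (Or.inr rfl) x h1 h2).2.1
        rw [neg_one_smul] at this
        simp only [this]
      · rintro x ⟨⟨h1, h2⟩, h3⟩
        have a1 := hs (-1) (Or.inr rfl) x h1 h2
        have a2 := key (-1) (Or.inr rfl) x h1 h2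
        rw [neg_one_smul] at a1 a2
        exact ⟨⟨a1.1, a2.1⟩, a2.2.2 h3⟩
  omega

/-- the basic computation of a shift along a coordinate -/
lemma shift_calc (h : IsQ A q) {k e : ℕ} (hk : 2 * e + 1 ≤ k) {x : Fin 4 → ℤ} {j : Fin 4}
    (h1 : (2 ^ e : ℤ) ∣ (A *ᵥ x) j) (h2 : ¬ (2 ^ (e + 1) : ℤ) ∣ (A *ᵥ x) j) (s : ℤ)
    (hs : s = 1 ∨ s = -1) :
    (2 ^ (k + 1) : ℤ) ∣ q (x + s • ((2 ^ (k - e) : ℤ) • Pi.single j 1)) - q x - 2 ^ k := by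
  obtain ⟨u, hu⟩ := h1
  have hu2 : ¬ (2 : ℤ) ∣ u := by
    rintro ⟨t, rfl⟩
    exact h2 ⟨t, by rw [hu]; ring⟩
  rw [smul_smul, h.add_smul]
  have e1 : (Pi.single j 1 : Fin 4 → ℤ) ⬝ᵥ A *ᵥ x = 2 ^ e * u := by
    rw [single_dotProduct, one_mul, hu]
  rw [e1]
  obtain ⟨m, rfl⟩ : ∃ m, k = 2 * e + 1 + m := ⟨k - (2 * e + 1), by omega⟩
  have e2 : 2 * e + 1 + m - e = e + 1 + m := by omega
  rw [e2]
  have e3 : ∃ t, s * u - 1 = 2 * t := by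
    rcases hs with rfl | rfl
    · exact ⟨(u - 1) / 2, by omega⟩
    · exact ⟨(- u - 1) / 2, by omega⟩
  obtain ⟨t, ht⟩ := e3
  refine ⟨t + s ^ 2 * 2 ^ m * q (Pi.single j 1), ?_⟩
  have : s * u = 2 * t + 1 := by linarith
  linear_combination 2 ^ (2 * e + 1 + m) * this

/-- eventual lower bound for the counts -/
def LB (q : (Fin 4 → ℤ) → ℤ) (n : ℤ) (b : ℕ) : Prop :=
  ∃ k0, ∀ k ≥ k0, 2 ^ (3 * k) ≤ 2 ^ b * cnt k (U q n k)

lemma LB.mono {n : ℤ} {b c : ℕ} (h : LB q n b) (hbc : b ≤ c) : LB q n c := by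
  obtain ⟨k0, hk⟩ := h
  exact ⟨k0, fun k h => (hk k h).trans (Nat.mul_le_mul_right _ (Nat.pow_le_pow_right (by norm_num) hbc))⟩

lemma dvd_mulVec (m : ℤ) {v : Fin 4 → ℤ} (h : ∀ i, m ∣ v i) (B : Matrix (Fin 4) (Fin 4) ℤ) (i : Fin 4) :
    m ∣ (B *ᵥ v) i := by
  simp only [mulVec, dotProduct]
  exact Finset.dvd_sum fun k _ => (h k).mul_left _

lemma dvd_dot (m : ℤ) {v : Fin 4 → ℤ} (h : ∀ i, m ∣ v i) (x : Fin 4 → ℤ) : m ∣ x ⬝ᵥ v := by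
  simp only [dotProduct]
  exact Finset.dvd_sum fun k _ => (h k).mul_left _

lemma ball (h : IsQ A q) (n : ℤ) (e : ℕ) (y : Fin 4 → ℤ) (h1 : ∀ i, (2 ^ e : ℤ) ∣ (A *ᵥ y) i)
    (h2 : ∃ j, ¬ (2 ^ (e + 1) : ℤ) ∣ (A *ᵥ y) j) (h3 : (2 ^ (2 * e + 1) : ℤ) ∣ q y - n) :
    LB q n (2 * e + 3) := by
  obtain ⟨j, hj⟩ := h2
  let W : (Fin 4 → ℤ) → Prop := fun x => ∀ i, (2 ^ (e + 1) : ℤ) ∣ x i - y i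
  have hW : Per (e + 1) W := by
    intro x v hx i
    have : (x + (2 ^ (e + 1) : ℤ) • v) i - y i = (x i - y i) + 2 ^ (e + 1) * v i := by
      simp only [Pi.add_apply, Pi.smul_apply, smul_eq_mul]; ring
    rw [this]
    exact dvd_add (hx i) (dvd_mul_right _ _)
  have hWA : ∀ x, W x → ∀ i, (2 ^ (e + 1) : ℤ) ∣ (A *ᵥ x) i - (A *ᵥ y) i := by
    intro x hx i
    have := dvd_mulVec (2 ^ (e + 1)) (v := x - y) hx A i
    rwa [mulVec_sub] at this
  have hWU : ∀ x, W x → U q n (2 * e + 1) x := by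
    intro x hx
    have : ∃ w : Fin 4 → ℤ, x = y + (2 ^ (e + 1) : ℤ) • w := by
      choose w hw using hx
      refine ⟨w, funext fun i => ?_⟩
      have := hw i
      simp only [Pi.add_apply, Pi.smul_apply, smul_eq_mul]; linarith
    obtain ⟨w, rfl⟩ := this
    unfold U
    rw [h.add_smul]
    obtain ⟨t, ht⟩ := dvd_dot _ h1 w
    obtain ⟨a, ha⟩ := h3
    refine ⟨a + t + 2 * q w, ?_⟩
    rw [ht]
    linear_combination ha
  have main : ∀ m, 2 ^ (4 * e + 3 * m) ≤ cnt (2 * e + 1 + m) (fun x => W x ∧ U q n (2 * e + 1 + m) x) := by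
    intro m
    induction m with
    | zero =>
      have e1 : cnt (2 * e + 1 + 0) (fun x => W x ∧ U q n (2 * e + 1 + 0) x) = cnt (e + 1 + e) W := by
        rw [show e + 1 + e = 2 * e + 1 + 0 by ring]
        exact cnt_congr fun x => ⟨fun hx => hx.1, fun hx => ⟨hx, hWU x hx⟩⟩
      rw [e1, cnt_add hW]
      have e2 : 1 ≤ cnt (e + 1) W := cnt_pos hW (x := y) (fun i => by simp)
      calc 2 ^ (4 * e + 3 * 0) = 16 ^ e * 1 := by rw [mul_zero, add_zero, pow_mul]; norm_num
        _ ≤ _ := Nat.mul_le_mul_left _ e2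
    | succ m ih =>
      have := hensel_step h n (2 * e + 1 + m) W (hW.mono (by omega))
        (fun _ => (2 ^ (2 * e + 1 + m - e) : ℤ) • Pi.single j 1) (fun _ _ => rfl) ?_
      · rw [← add_assoc, this]
        calc 2 ^ (4 * e + 3 * (m + 1)) = 8 * 2 ^ (4 * e + 3 * m) := by
              rw [mul_add, ← add_assoc, pow_add]; ring
          _ ≤ _ := Nat.mul_le_mul_left _ ih
      · intro s hs x hx _
        refine ⟨?_, rfl, ?_⟩
        · have := (hW.mono (l := 2 * e + 1 + m - e) (by omega)) x (s • Pi.single j 1) hx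
          rwa [smul_comm] at this
        · refine shift_calc h (by omega) ?_ ?_ s hs
          · have a1 := (pow_dvd_pow (2 : ℤ) (Nat.le_succ e)).trans (hWA x hx j)
            exact (dvd_sub_left (h1 j)).1 a1
          · intro hc
            apply hj
            exact (dvd_sub_right hc).1 (hWA x hx j)
  refine ⟨2 * e + 1, fun k hk => ?_⟩
  obtain ⟨m, rfl⟩ := Nat.exists_eq_add_of_le hk
  calc 2 ^ (3 * (2 * e + 1 + m)) = 2 ^ (2 * e + 3) * 2 ^ (4 * e + 3 * m) := by
        rw [← pow_add]; congr 1; ring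
    _ ≤ 2 ^ (2 * e + 3) * cnt (2 * e + 1 + m) (fun x => W x ∧ U q n (2 * e + 1 + m) x) :=
        Nat.mul_le_mul_left _ (main m)
    _ ≤ _ := Nat.mul_le_mul_left _ (cnt_mono fun x hx => hx.2)

/-- the counts stabilise -/
lemma stable (h : IsQ A q) (n : ℤ) (hn : n ≠ 0) :
    ∃ k0, ∀ k ≥ k0, cnt (k + 1) (U q n (k + 1)) = 8 * cnt k (U q n k) := by
  classical
  obtain ⟨E, hE⟩ : ∃ E : ℕ, ¬ (2 ^ E : ℤ) ∣ 2 * n := by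
    by_contra hc
    push Not at hc
    have hf := (Int.finiteMultiplicity_iff (a := 2) (b := 2 * n)).2 ⟨by norm_num, by omega⟩
    obtain ⟨m, hm⟩ := hf
    exact hm (hc _)
  refine ⟨2 * E, fun k hk => ?_⟩
  let C : (Fin 4 → ℤ) → ℕ × Fin 4 → Prop := fun x p =>
    p.1 < E ∧ (∀ i, (2 ^ p.1 : ℤ) ∣ (A *ᵥ x) i) ∧ ¬ (2 ^ (p.1 + 1) : ℤ) ∣ (A *ᵥ x) p.2
  let F : (ℕ × Fin 4 → Prop) → (Fin 4 → ℤ) := fun D =>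
    if hD : ∃ p, D p then (2 ^ (k - (Classical.choose hD).1) : ℤ) • Pi.single (Classical.choose hD).2 1
    else 0
  have hC : ∀ x w, C (x + (2 ^ E : ℤ) • w) = C x := by
    intro x w
    funext p
    have key : ∀ m ≤ E, ∀ i, (2 ^ m : ℤ) ∣ (A *ᵥ (x + (2 ^ E : ℤ) • w)) i ↔ (2 ^ m : ℤ) ∣ (A *ᵥ x) i := by
      intro m hm i
      rw [mulVec_add, mulVec_smul]
      simp only [Pi.add_apply, Pi.smul_apply, smul_eq_mul]
      exact dvd_add_left ((pow_dvd_pow 2 hm).mul_right _)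
    simp only [C, eq_iff_iff]
    constructor
    · rintro ⟨a, b, c⟩
      exact ⟨a, fun i => (key _ a.le i).1 (b i), fun hh => c ((key _ a _).2 hh)⟩
    · rintro ⟨a, b, c⟩
      exact ⟨a, fun i => (key _ a.le i).2 (b i), fun hh => c ((key _ a _).1 hh)⟩
  have hCx : ∀ x, U q n k x → ∃ p, C x p := by
    intro x hx
    by_contra hc
    push Not at hc
    have : ∀ m ≤ E, ∀ i, (2 ^ m : ℤ) ∣ (A *ᵥ x) i := by
      intro m
      induction m with
      | zero => intro _ i; simp
      | succ m ih =>
        intro hm i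
        by_contra hh
        exact hc (m, i) ⟨hm, ih (by omega), hh⟩
    have h1 := dvd_dot _ (this E le_rfl) x
    rw [← h.2] at h1
    have h2 : (2 ^ E : ℤ) ∣ q x - n := (pow_dvd_pow 2 (by omega)).trans hx
    apply hE
    have : 2 * n = 2 * q x - 2 * (q x - n) := by ring
    rw [this]
    exact dvd_sub h1 (h2.mul_left _)
  have hF : ∀ x, U q n k x → ∃ p, C x p ∧ F (C x) = (2 ^ (k - p.1) : ℤ) • Pi.single p.2 1 := by
    intro x hx
    have hD := hCx x hx
    exact ⟨Classical.choose hD, Classical.choose_spec hD, dif_pos hD⟩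
  have := hensel_step h n k (fun _ => True) (fun _ _ _ => trivial) (fun x => F (C x)) ?_ ?_
  · simpa using this
  · intro x w
    have := hC x ((2 ^ (k + 1 - E) : ℤ) • w)
    rw [smul_smul, ← pow_add, Nat.add_sub_cancel' (by omega)] at this
    simp only [this]
  · intro s hs x _ hx
    obtain ⟨p, hp, hv⟩ := hF x hx
    refine ⟨trivial, ?_, ?_⟩
    · conv_lhs => rw [hv]
      have := hC x ((2 ^ (k - p.1 - E) : ℤ) • s • Pi.single p.2 1)
      have hlt := hp.1
      rw [smul_smul, ← pow_add, Nat.add_sub_cancel' (by omega), smul_comm] at this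
      rw [this]
    · rw [hv]
      have hlt := hp.1
      exact shift_calc h (by omega) (hp.2.1 _) hp.2.2 s hs

end LD

namespace LD

open Matrix

variable {A : Matrix (Fin 4) (Fin 4) ℤ} {q : (Fin 4 → ℤ) → ℤ}

lemma IsQ.comp (h : IsQ A q) (T : Matrix (Fin 4) (Fin 4) ℤ) :
    IsQ (Tᵀ * A * T) (fun y => q (T *ᵥ y)) := by
  refine ⟨?_, fun x => ?_⟩
  · unfold Matrix.IsSymm
    rw [transpose_mul, transpose_mul, transpose_transpose, h.1.eq, Matrix.mul_assoc]
  · rw [h.2, ← mulVec_mulVec, ← mulVec_mulVec, dotProduct_mulVec x, vecMul_transpose]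

lemma det_comp (T : Matrix (Fin 4) (Fin 4) ℤ) (hT : T.det = 2) : (Tᵀ * A * T).det = 4 * A.det := by
  rw [det_mul, det_mul, det_transpose, hT]; ring

lemma LB.opI (h : IsQ A q) {T : Matrix (Fin 4) (Fin 4) ℤ} {n : ℤ} {b : ℕ}
    (hT : ∀ k P, Per k P → cnt k (fun y => P (T.mulVec y)) ≤ 2 * cnt k P)
    (hb : LB (fun y => q (T *ᵥ y)) n b) : LB q n (b + 1) := by
  obtain ⟨k0, hk⟩ := hb
  refine ⟨k0, fun k hkk => (hk k hkk).trans ?_⟩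
  rw [pow_succ, mul_assoc]
  exact Nat.mul_le_mul_left _ (hT k _ (h.per n k))

lemma LB.opII {A' : Matrix (Fin 4) (Fin 4) ℤ} {q' : (Fin 4 → ℤ) → ℤ} (h : IsQ A' q')
    {n : ℤ} {b : ℕ} (hq : ∀ x, q x = 2 * q' x) (hb : LB q' n (b + 1)) : LB q (2 * n) b := by
  obtain ⟨k0, hk⟩ := hb
  refine ⟨k0 + 1, fun k hkk => ?_⟩
  obtain ⟨m, rfl⟩ : ∃ m, k = m + 1 := ⟨k - 1, by omega⟩
  have h1 := hk m (by omega)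
  have h2 : cnt (m + 1) (U q (2 * n) (m + 1)) = cnt (m + 1) (U q' n m) := by
    refine cnt_congr fun x => ?_
    unfold U
    rw [hq, ← mul_sub, pow_succ, mul_comm _ (2 : ℤ), mul_dvd_mul_iff_left two_ne_zero]
  rw [h2, cnt_succ (h.per n m)]
  rw [pow_succ] at h1
  calc 2 ^ (3 * (m + 1)) = 8 * 2 ^ (3 * m) := by rw [mul_add, pow_add]; ring
    _ ≤ 8 * (2 ^ b * 2 * cnt m (U q' n m)) := Nat.mul_le_mul_left _ h1
    _ = _ := by ring

lemma dot_single (A : Matrix (Fin 4) (Fin 4) ℤ) (i j : Fin 4) :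
    (Pi.single i 1 : Fin 4 → ℤ) ⬝ᵥ A *ᵥ (Pi.single j 1) = A i j := by
  simp

lemma IsQ.diag (h : IsQ A q) (i : Fin 4) : A i i = 2 * q (Pi.single i 1) := by
  rw [h.2, dot_single]

lemma IsQ.half (h : IsQ A q) (he : ∀ x, 2 ∣ q x) :
    ∃ A' q', IsQ A' q' ∧ (∀ x, q x = 2 * q' x) ∧ A = (2 : ℤ) • A' := by
  choose q' hq' using he
  have hA : ∀ i j, 2 ∣ A i j := by
    intro i j
    have := h.add (Pi.single j 1) (Pi.single i 1)
    rw [dot_single, hq', hq', hq'] at this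
    omega
  choose A' hA' using hA
  have e : A = (2 : ℤ) • Matrix.of A' := by
    ext i j
    simp [hA']
  refine ⟨Matrix.of A', q', ⟨?_, fun x => ?_⟩, hq', e⟩
  · ext i j
    have := h.1.apply i j
    rw [hA', hA'] at this
    simp only [transpose_apply, of_apply]
    linarith
  · have := h.2 x
    rw [e, smul_mulVec, dotProduct_smul, smul_eq_mul, hq'] at this
    linarith

lemma det_two_smul (A : Matrix (Fin 4) (Fin 4) ℤ) : ((2 : ℤ) • A).det = 16 * A.det := by
  rw [det_smul]; norm_num

lemma det_even16 (he : ∀ i j, 2 ∣ A i j) : 16 ∣ A.det := by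
  choose A' hA' using he
  have e : A = (2 : ℤ) • Matrix.of A' := by
    ext i j
    simp [hA']
  rw [e, det_two_smul]
  exact dvd_mul_right _ _

lemma det_even {x : Fin 4 → ℤ} (h : ∀ i, 2 ∣ (A *ᵥ x) i) (hx : ∃ i, ¬ 2 ∣ x i) : 2 ∣ A.det := by
  obtain ⟨i, hi⟩ := hx
  have h1 := dvd_mulVec 2 h A.adjugate i
  rw [mulVec_mulVec, adjugate_mul, smul_mulVec, one_mulVec, Pi.smul_apply, smul_eq_mul] at h1
  exact (Int.prime_two.dvd_or_dvd h1).resolve_right hi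

lemma IsQ.linear (h : IsQ A q) (he : ∀ i j, 2 ∣ A i j) (x : Fin 4 → ℤ) :
    2 ∣ q x - (fun i => q (Pi.single i 1)) ⬝ᵥ x := by
  have hb : ∀ x y : Fin 4 → ℤ, 2 ∣ x ⬝ᵥ A *ᵥ y := by
    intro x y
    refine dvd_dot _ (fun i => ?_) _
    simp only [mulVec, dotProduct]
    exact Finset.dvd_sum fun k _ => (he i k).mul_right _
  let f : (Fin 4 → ℤ) →+ ZMod 2 := AddMonoidHom.mk' (fun x => ((q x : ℤ) : ZMod 2)) (by
    intro x y
    rw [h.add]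
    push_cast
    have : ((y ⬝ᵥ A *ᵥ x : ℤ) : ZMod 2) = 0 := (ZMod.intCast_zmod_eq_zero_iff_dvd _ 2).2 (hb y x)
    rw [this, add_zero])
  have hf : ∀ x, f x = ((q x : ℤ) : ZMod 2) := fun x => rfl
  have h1 : f x = ∑ i, f (Pi.single i (x i)) := by
    rw [← map_sum, Finset.univ_sum_single]
  have h2 : ∀ i, f (Pi.single i (x i)) = ((q (Pi.single i 1) * x i : ℤ) : ZMod 2) := by
    intro i
    have : (Pi.single i (x i) : Fin 4 → ℤ) = x i • Pi.single i 1 := by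
      rw [← Pi.single_smul]; simp
    rw [this, map_zsmul, hf]
    push_cast
    rw [zsmul_eq_mul, mul_comm]
  simp only [h2, hf] at h1
  apply (ZMod.intCast_zmod_eq_zero_iff_dvd _ 2).1
  simp only [dotProduct]
  push_cast at h1 ⊢
  rw [h1, sub_self]

/-- The claim for a given precision `M`. -/
def Main (M : ℕ) : Prop :=
  ∀ (A : Matrix (Fin 4) (Fin 4) ℤ) (q : (Fin 4 → ℤ) → ℤ) (n : ℤ) (x : Fin 4 → ℤ) (d : ℕ),
    IsQ A q → ¬ (2 ^ M : ℤ) ∣ n → (2 ^ (M + 2) : ℤ) ∣ q x - n → (∃ i, ¬ 2 ∣ x i) →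
    ¬ (2 ^ (d + 1) : ℤ) ∣ A.det → LB q n (4 + (d + 1) / 2)

lemma le_of_det {a d : ℕ} {D : ℤ} (h1 : (2 ^ a : ℤ) ∣ D) (h2 : ¬ (2 ^ (d + 1) : ℤ) ∣ D) : a ≤ d := by
  by_contra hc
  exact h2 ((pow_dvd_pow 2 (by omega)).trans h1)

lemma odd_of_mulVec {T : Matrix (Fin 4) (Fin 4) ℤ} {y : Fin 4 → ℤ} (h : ∃ i, ¬ 2 ∣ (T *ᵥ y) i) :
    ∃ i, ¬ 2 ∣ y i := by
  by_contra hc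
  push Not at hc
  obtain ⟨i, hi⟩ := h
  exact hi (dvd_mulVec 2 hc T i)

lemma reduce {M : ℕ} (ih : ∀ M' < M, Main M') (h : IsQ A q) (he : ∀ x, 2 ∣ q x) {n : ℤ}
    (hn : 2 ∣ n) (hM : ¬ (2 ^ M : ℤ) ∣ n) {x : Fin 4 → ℤ} (hx : (2 ^ (M + 2) : ℤ) ∣ q x - n)
    (hx' : ∃ i, ¬ 2 ∣ x i) {d : ℕ} (hd : ¬ (2 ^ (d + 1) : ℤ) ∣ A.det) : LB q n (3 + (d - 3) / 2) := by
  obtain ⟨A', q', h', hq, hA⟩ := h.half he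
  obtain ⟨n', rfl⟩ := hn
  obtain ⟨m, rfl⟩ : ∃ m, M = m + 1 := by
    rcases M with _ | m
    · simp at hM
    · exact ⟨m, rfl⟩
  have e1 : A.det = 2 ^ 4 * A'.det := by rw [hA, det_two_smul]; norm_num
  have hd4 : 4 ≤ d := le_of_det ⟨_, e1⟩ hd
  apply LB.opII h' hq
  have := ih m (by omega) A' q' n' x (d - 4) h' ?_ ?_ hx' ?_
  · exact this.mono (by omega)
  · rintro ⟨t, ht⟩
    exact hM ⟨t, by rw [ht]; ring⟩
  · obtain ⟨t, ht⟩ := hx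
    refine ⟨t, ?_⟩
    rw [hq] at ht
    have : 2 * (q' x - n') = 2 * (2 ^ (m + 2) * t) := by rw [mul_sub, ht]; ring
    linarith
  · rintro ⟨t, ht⟩
    apply hd
    refine ⟨t, ?_⟩
    rw [e1, ht, ← mul_assoc, ← pow_add]
    congr 2
    omega

lemma evenstep {M : ℕ} (ih : ∀ M' < M, Main M') (h : IsQ A q) (he : ∀ i j, 2 ∣ A i j) {n : ℤ}
    (hn : 2 ∣ n) (hM : ¬ (2 ^ M : ℤ) ∣ n) {x : Fin 4 → ℤ} (hx : (2 ^ (M + 2) : ℤ) ∣ q x - n)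
    (hx' : ∃ i, ¬ 2 ∣ x i) {d : ℕ} (hd : ¬ (2 ^ (d + 1) : ℤ) ∣ A.det) : LB q n (4 + (d - 1) / 2) := by
  have hlin := h.linear he
  set l : Fin 4 → ℤ := fun i => q (Pi.single i 1) with hl
  by_cases hall : ∃ j, ¬ 2 ∣ l j
  · obtain ⟨T, hT1, hT2, hT3, hT4⟩ := exists_T l hall
    have hqx : 2 ∣ q x := by
      have : (2 : ℤ) ∣ q x - n := (dvd_pow_self 2 (by omega)).trans hx
      omega
    obtain ⟨y, rfl⟩ := hT3 x (by have := hlin x; omega)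
    have := reduce ih (h.comp T) (fun z => by have := hT2 z; have := hlin (T *ᵥ z); omega) hn hM
      (x := y) hx (odd_of_mulVec hx') (d := d + 2) ?_
    · exact (LB.opI h hT4 this).mono (by omega)
    · rw [det_comp T hT1]
      rintro ⟨t, ht⟩
      apply hd
      refine ⟨t, ?_⟩
      have : (2 : ℤ) ^ (d + 2 + 1) = 4 * 2 ^ (d + 1) := by ring
      rw [this, mul_assoc] at ht
      linarith
  · push Not at hall
    have := reduce ih h (fun z => by
      have h1 := hlin z
      have h2 := dvd_dot 2 hall z
      rw [dotProduct_comm] at h2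
      omega) hn hM hx hx' hd
    exact this.mono (by omega)

lemma compl_pair : ∀ i j : Fin 4, i ≠ j → ∃ m m', ∀ k, k = i ∨ k = j ∨ k = m ∨ k = m' := by
  decide

/-- recover a coordinate from a parity -/
lemma coord_even {i j : Fin 4} {l u : Fin 4 → ℤ} (hj : ¬ 2 ∣ l j) (hi : 2 ∣ l i)
    (hu : ∀ k, k ≠ i → k ≠ j → 2 ∣ u k) (hd : 2 ∣ l ⬝ᵥ u) : 2 ∣ u j := by
  simp only [dotProduct] at hd
  rw [← Finset.add_sum_erase _ _ (Finset.mem_univ j)] at hd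
  have : 2 ∣ ∑ k ∈ Finset.univ.erase j, l k * u k := by
    refine Finset.dvd_sum fun k hk => ?_
    by_cases hki : k = i
    · subst hki; exact hi.mul_right _
    · exact (hu k hki (Finset.ne_of_mem_erase hk)).mul_left _
  have h2 := (dvd_add_left this).1 hd
  exact (Int.prime_two.dvd_or_dvd h2).resolve_left hj

/-- The bilinear form is divisible by four on the sublattice. -/
lemma four_dvd (h : IsQ A q) {i j : Fin 4} (hij : i ≠ j) (hodd : ¬ 2 ∣ A i j) {x : Fin 4 → ℤ}
    (hx : ∀ m, 4 ∣ (A *ᵥ x) m) (hx' : ∃ i, ¬ 2 ∣ x i)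
    (hR : ∀ y, 2 ∣ (A *ᵥ y) i → 2 ∣ (A *ᵥ y) j → (∀ m, 2 ∣ (A *ᵥ y) m) ∧ 2 ∣ q y)
    {y z : Fin 4 → ℤ} (hyi : 2 ∣ (A *ᵥ y) i) (hyj : 2 ∣ (A *ᵥ y) j)
    (hzi : 2 ∣ (A *ᵥ z) i) (hzj : 2 ∣ (A *ᵥ z) j) : 4 ∣ y ⬝ᵥ A *ᵥ z := by
  have hdi : ∀ k, 2 ∣ A k k := fun k => ⟨_, h.diag k⟩
  have hodd' : ¬ 2 ∣ A j i := by rwa [h.1.apply]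
  have hzero : ∀ u : Fin 4 → ℤ, 2 ∣ (A *ᵥ u) i → 2 ∣ (A *ᵥ u) j →
      (∀ k, k ≠ i → k ≠ j → 2 ∣ u k) → ∀ k, 2 ∣ u k := by
    intro u h1 h2 h3 k
    by_cases hki : k = i
    · subst hki
      exact coord_even hodd' (hdi j) (fun k a b => h3 k b a) h2
    by_cases hkj : k = j
    · subst hkj
      exact coord_even hodd (hdi i) h3 h1
    exact h3 k hki hkj
  -- a vector with all coordinates even pairs to a multiple of four
  have hE : ∀ u v : Fin 4 → ℤ, (∀ k, 2 ∣ u k) → 2 ∣ (A *ᵥ v) i → 2 ∣ (A *ᵥ v) j → 4 ∣ u ⬝ᵥ A *ᵥ v := by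
    intro u v hu h1 h2
    simp only [dotProduct]
    refine Finset.dvd_sum fun k _ => ?_
    have := mul_dvd_mul (hu k) ((hR v h1 h2).1 k)
    norm_num at this
    exact this
  have hxi : 2 ∣ (A *ᵥ x) i := Dvd.dvd.trans (by norm_num) (hx i)
  have hxj : 2 ∣ (A *ᵥ x) j := Dvd.dvd.trans (by norm_num) (hx j)
  obtain ⟨m, m', hmm, hxm⟩ : ∃ m m', (∀ k, k = i ∨ k = j ∨ k = m ∨ k = m') ∧ ¬ 2 ∣ x m := by
    obtain ⟨m, m', hk⟩ := compl_pair i j hij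
    by_cases h1 : 2 ∣ x m
    · refine ⟨m', m, fun k => ?_, fun h2 => ?_⟩
      · rcases hk k with a | a | a | a <;> simp [a]
      · obtain ⟨k, hk'⟩ := hx'
        refine hk' (hzero x hxi hxj (fun k a b => ?_) k)
        rcases hk k with c | c | c | c
        · exact absurd c a
        · exact absurd c b
        · rw [c]; exact h1
        · rw [c]; exact h2
    · exact ⟨m, m', hk, h1⟩
  have hzero' : ∀ u : Fin 4 → ℤ, 2 ∣ (A *ᵥ u) i → 2 ∣ (A *ᵥ u) j → 2 ∣ u m → 2 ∣ u m' →
      ∀ k, 2 ∣ u k := by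
    intro u h1 h2 h3 h4
    refine hzero u h1 h2 fun k a b => ?_
    rcases hmm k with c | c | c | c
    · exact absurd c a
    · exact absurd c b
    · rw [c]; exact h3
    · rw [c]; exact h4
  -- reduction of one vector
  have hred : ∀ u : Fin 4 → ℤ, 2 ∣ (A *ᵥ u) i → 2 ∣ (A *ᵥ u) j →
      2 ∣ (A *ᵥ (u + (-u m) • x)) i ∧ 2 ∣ (A *ᵥ (u + (-u m) • x)) j ∧ 2 ∣ (u + (-u m) • x) m := by
    intro u h1 h2
    rw [mulVec_add, mulVec_smul]
    simp only [Pi.add_apply, Pi.smul_apply, smul_eq_mul]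
    refine ⟨dvd_add h1 (hxi.mul_left _), dvd_add h2 (hxj.mul_left _), ?_⟩
    have : u m + -u m * x m = u m * (1 - x m) := by ring
    rw [this]
    exact Dvd.dvd.mul_left (by omega) _
  have hxv : ∀ v : Fin 4 → ℤ, 4 ∣ v ⬝ᵥ A *ᵥ x := fun v => dvd_dot 4 hx v
  have hcong : y ⬝ᵥ A *ᵥ z = (y + (-y m) • x) ⬝ᵥ A *ᵥ (z + (-z m) • x)
      + (y m * (z ⬝ᵥ A *ᵥ x) + z m * (y ⬝ᵥ A *ᵥ x) - y m * z m * (x ⬝ᵥ A *ᵥ x)) := by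
    rw [mulVec_add, mulVec_smul, dotProduct_add, add_dotProduct, add_dotProduct, dotProduct_smul,
      dotProduct_smul, smul_dotProduct, smul_dotProduct, dot_symm h.1 x z]
    simp only [smul_eq_mul]
    ring
  rw [hcong]
  refine dvd_add ?_ (dvd_sub (dvd_add ((hxv z).mul_left _) ((hxv y).mul_left _)) ((hxv x).mul_left _))
  obtain ⟨a1, a2, a3⟩ := hred y hyi hyj
  obtain ⟨b1, b2, b3⟩ := hred z hzi hzj
  generalize y + (-y m) • x = y' at *
  generalize z + (-z m) • x = z' at *
  by_cases c1 : 2 ∣ y' m'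
  · exact hE _ _ (hzero' y' a1 a2 a3 c1) b1 b2
  by_cases c2 : 2 ∣ z' m'
  · rw [dot_symm h.1]
    exact hE _ _ (hzero' z' b1 b2 b3 c2) a1 a2
  have e : y' ⬝ᵥ A *ᵥ z' = (y' - z') ⬝ᵥ A *ᵥ z' + 2 * q z' := by
    rw [h.2, sub_dotProduct]; ring
  rw [e]
  refine dvd_add (hE _ _ (hzero' _ ?_ ?_ ?_ ?_) b1 b2) ?_
  · rw [mulVec_sub]; exact dvd_sub a1 b1
  · rw [mulVec_sub]; exact dvd_sub a2 b2
  · exact dvd_sub a3 b3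
  · simp only [Pi.sub_apply]; omega
  · have := (hR z' b1 b2).2
    omega

lemma main_all (M : ℕ) : Main M := by
  induction M using Nat.strong_induction_on with
  | _ M ih =>
  intro A q n x d h hM hx hx' hd
  obtain ⟨m, rfl⟩ : ∃ m, M = m + 1 := by
    rcases M with _ | m
    · simp at hM
    · exact ⟨m, rfl⟩
  by_cases h0 : ∃ j, ¬ 2 ∣ (A *ᵥ x) j
  · exact (ball h n 0 x (by simp) (by simpa using h0)
      ((pow_dvd_pow 2 (by omega)).trans hx)).mono (by omega)
  push Not at h0
  by_cases h1 : ∃ j, ¬ 4 ∣ (A *ᵥ x) j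
  · have hd1 : 1 ≤ d := le_of_det (by simpa using det_even h0 hx') hd
    exact (ball h n 1 x (by simpa using h0) (by simpa using h1)
      ((pow_dvd_pow 2 (by omega)).trans hx)).mono (by omega)
  push Not at h1
  have hqx : 2 ∣ q x := by
    have := dvd_dot 4 h1 x
    rw [← h.2] at this
    omega
  have hn : 2 ∣ n := by
    have : (2 : ℤ) ∣ q x - n := (dvd_pow_self 2 (by omega)).trans hx
    omega
  by_cases hev : ∀ i j, 2 ∣ A i j
  · exact (evenstep ih h hev hn hM hx hx' hd).mono (by omega)
  by_cases hG : ∃ y, 2 ∣ q y ∧ ∃ j, ¬ 2 ∣ (A *ᵥ y) j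
  · obtain ⟨y, hy1, hy2⟩ := hG
    exact (ball h n 0 y (by simp) (by simpa using hy2) (by
      simpa using dvd_sub hy1 hn)).mono (by omega)
  push Not at hG hev
  obtain ⟨i, j, hij⟩ := hev
  have hne : i ≠ j := by
    rintro rfl
    exact hij ⟨_, h.diag i⟩
  have hcol : ∀ k l, (A *ᵥ (Pi.single k 1)) l = A l k := by
    intro k l
    simp
  have hij' : ¬ 2 ∣ A j i := by rwa [h.1.apply]
  have hqi : ¬ 2 ∣ q (Pi.single i 1) := by
    intro hc
    have := hG _ hc j
    rw [hcol] at this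
    exact hij' this
  have hR : ∀ y, 2 ∣ (A *ᵥ y) i → 2 ∣ (A *ᵥ y) j → (∀ m, 2 ∣ (A *ᵥ y) m) ∧ 2 ∣ q y := by
    intro y hyi hyj
    have : 2 ∣ q y := by
      by_contra hc
      have e1 := h.add y (Pi.single i 1)
      rw [single_dotProduct, one_mul] at e1
      have := hG (y + Pi.single i 1) (by omega) j
      rw [mulVec_add, Pi.add_apply, hcol] at this
      omega
    exact ⟨hG y this, this⟩
  obtain ⟨T1, t11, t12, t13, t14⟩ := exists_T (A i) ⟨j, hij⟩
  have hl2 : ∀ y, (T1ᵀ *ᵥ (A j)) ⬝ᵥ y = A j ⬝ᵥ T1 *ᵥ y := by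
    intro y
    rw [mulVec_transpose, dotProduct_mulVec]
  have hodd2 : ∃ k, ¬ 2 ∣ (T1ᵀ *ᵥ (A j)) k := by
    by_contra hc
    push Not at hc
    obtain ⟨y, hy⟩ := t13 (Pi.single i 1) (by
      have := hcol i i
      rw [mulVec] at this
      rw [this]; exact ⟨_, h.diag i⟩)
    have a1 := dvd_dot 2 hc y
    rw [dotProduct_comm, hl2, hy] at a1
    have := hcol i j
    rw [mulVec] at this
    rw [this] at a1
    exact hij' a1
  obtain ⟨T2, t21, t22, t23, t24⟩ := exists_T _ hodd2
  obtain ⟨x1, hx1⟩ := t13 x (h0 i)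
  obtain ⟨x2, hx2⟩ := t23 x1 (by rw [hl2, hx1]; exact h0 j)
  have hTi : ∀ z, 2 ∣ (A *ᵥ (T1 *ᵥ (T2 *ᵥ z))) i := fun z => t12 _
  have hTj : ∀ z, 2 ∣ (A *ᵥ (T1 *ᵥ (T2 *ᵥ z))) j := fun z => by
    have := t22 z
    rwa [hl2] at this
  have hI1 := h.comp T1
  have hI2 := hI1.comp T2
  obtain ⟨A2, q2, h2, hq2, hA2⟩ := hI2.half (fun z => (hR _ (hTi z) (hTj z)).2)
  have hA2e : ∀ k l, 2 ∣ A2 k l := by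
    intro k l
    have e1 := four_dvd h hne hij h1 hx' hR (hTi (Pi.single k 1)) (hTj (Pi.single k 1))
      (hTi (Pi.single l 1)) (hTj (Pi.single l 1))
    have e2 : (T1 *ᵥ (T2 *ᵥ Pi.single k 1)) ⬝ᵥ A *ᵥ (T1 *ᵥ (T2 *ᵥ Pi.single l 1))
        = (Pi.single k 1 : Fin 4 → ℤ) ⬝ᵥ (T2ᵀ * (T1ᵀ * A * T1) * T2) *ᵥ (Pi.single l 1) := by
      simp only [← mulVec_mulVec]
      rw [dotProduct_mulVec (Pi.single k 1), vecMul_transpose, dotProduct_mulVec (T2 *ᵥ _) T1ᵀ,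
        vecMul_transpose]
    rw [e2, dot_single, hA2, Matrix.smul_apply, smul_eq_mul] at e1
    omega
  have hdet : A2.det = A.det := by
    have e1 : (T2ᵀ * (T1ᵀ * A * T1) * T2).det = 4 * (4 * A.det) := by
      rw [det_comp T2 t21, det_comp T1 t11]
    rw [hA2, det_two_smul] at e1
    linarith
  rw [← hdet] at hd
  have hd4 : 4 ≤ d := le_of_det (by simpa using det_even16 hA2e) hd
  obtain ⟨n1, rfl⟩ := hn
  have hx2' : ∃ i, ¬ 2 ∣ x2 i := by
    apply odd_of_mulVec (T := T2)
    rw [hx2]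
    apply odd_of_mulVec (T := T1)
    rwa [hx1]
  have hxq : (2 ^ (m + 2) : ℤ) ∣ q2 x2 - n1 := by
    obtain ⟨t, ht⟩ := hx
    refine ⟨t, ?_⟩
    have e1 := hq2 x2
    simp only [hx2, hx1] at e1
    rw [e1] at ht
    have : 2 * (q2 x2 - n1) = 2 * (2 ^ (m + 2) * t) := by rw [mul_sub, ht]; ring
    linarith
  have hm : ¬ (2 ^ m : ℤ) ∣ n1 := by
    rintro ⟨t, ht⟩
    exact hM ⟨t, by rw [ht]; ring⟩
  have hfin : LB q2 n1 (4 + (d - 1) / 2) := by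
    by_cases hn1 : 2 ∣ n1
    · exact evenstep (fun M' hM' => ih M' (by omega)) h2 hA2e hn1 hm hxq hx2' hd
    · have hm1 : 1 ≤ m := by
        by_contra hc
        have : m = 0 := by omega
        subst this
        simp at hm
      have e0 : ∀ k, 2 ∣ (A2 *ᵥ x2) k := by
        intro k
        simp only [mulVec, dotProduct]
        exact Finset.dvd_sum fun l _ => (hA2e k l).mul_right _
      refine (ball h2 n1 1 x2 (by simpa using e0) ?_ ((pow_dvd_pow 2 (by omega)).trans hxq)).mono
        (by omega)
      by_contra hc
      push Not at hc
      norm_num at hc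
      have a1 := dvd_dot 4 hc x2
      rw [← h2.2] at a1
      have a2 : (2 : ℤ) ∣ q2 x2 - n1 := (dvd_pow_self 2 (by omega)).trans hxq
      omega
  have f1 := LB.opII h2 hq2 (b := 3 + (d - 1) / 2) (hfin.mono (by omega))
  have f2 := LB.opI hI1 t24 f1
  have f3 := LB.opI h t14 f2
  exact f3.mono (by omega)

end LD

namespace LD

open Matrix

lemma Qval_expand {R : Type*} [CommRing R] (A : Matrix (Fin 4) (Fin 4) ℤ) (x : Fin 4 → R) :
    Qval A x = ((A 0 0 / 2 : ℤ) : R) * x 0 ^ 2 + ((A 1 1 / 2 : ℤ) : R) * x 1 ^ 2 +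
      ((A 2 2 / 2 : ℤ) : R) * x 2 ^ 2 + ((A 3 3 / 2 : ℤ) : R) * x 3 ^ 2 +
      ((A 0 1 : ℤ) : R) * (x 0 * x 1) + ((A 0 2 : ℤ) : R) * (x 0 * x 2) +
      ((A 0 3 : ℤ) : R) * (x 0 * x 3) + ((A 1 2 : ℤ) : R) * (x 1 * x 2) +
      ((A 1 3 : ℤ) : R) * (x 1 * x 3) + ((A 2 3 : ℤ) : R) * (x 2 * x 3) := by
  have h0 : Finset.Ioi (0 : Fin 4) = {1, 2, 3} := by decide
  have h1 : Finset.Ioi (1 : Fin 4) = {2, 3} := by decide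
  have h2 : Finset.Ioi (2 : Fin 4) = {3} := by decide
  have h3 : Finset.Ioi (3 : Fin 4) = ∅ := by decide
  unfold Qval
  rw [Fin.sum_univ_four, Fin.sum_univ_four, h0, h1, h2, h3]
  rw [Finset.sum_insert (by decide), Finset.sum_insert (by decide), Finset.sum_singleton,
    Finset.sum_insert (by decide), Finset.sum_singleton, Finset.sum_singleton, Finset.sum_empty]
  ring

lemma Qval_map {R S : Type*} [CommRing R] [CommRing S] (f : R →+* S)
    (A : Matrix (Fin 4) (Fin 4) ℤ) (x : Fin 4 → R) : f (Qval A x) = Qval A (fun i => f (x i)) := by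
  simp only [Qval_expand, map_add, map_mul, map_pow, map_intCast]

lemma isQ_Qval {A : Matrix (Fin 4) (Fin 4) ℤ} (hA : IsGram A) :
    IsQ A (fun x => Qval A x) := by
  refine ⟨hA.1, fun x => ?_⟩
  show 2 * Qval A x = _
  rw [Qval_expand]
  obtain ⟨a, ha⟩ := hA.2 0
  obtain ⟨b, hb⟩ := hA.2 1
  obtain ⟨c, hc⟩ := hA.2 2
  obtain ⟨e, he⟩ := hA.2 3
  simp only [mulVec, dotProduct, Fin.sum_univ_four]
  rw [hA.1.apply 0 1, hA.1.apply 0 2, hA.1.apply 0 3, hA.1.apply 1 2, hA.1.apply 1 3,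
    hA.1.apply 2 3, ha, hb, hc, he]
  simp only [Int.mul_ediv_cancel_left _ (two_ne_zero : (2 : ℤ) ≠ 0), Int.cast_id]
  ring

lemma localCount_eq (A : Matrix (Fin 4) (Fin 4) ℤ) (n k : ℕ) :
    localCount A 2 n k = cnt k (U (fun x => Qval A x) n k) := by
  unfold localCount cnt
  refine Nat.card_congr (Equiv.subtypeEquivRight fun x => ?_)
  have h1 : ((Qval A (lft x) : ℤ) : ZMod (2 ^ k)) = Qval A x := by
    have := Qval_map (Int.castRingHom (ZMod (2 ^ k))) A (lft x)
    have h2 : (fun i => (Int.castRingHom (ZMod (2 ^ k))) (lft x i)) = x := prj_lft x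
    rw [h2] at this
    simpa using this
  unfold U
  rw [← h1]
  have h3 := ZMod.intCast_eq_intCast_iff_dvd_sub (n : ℤ) (Qval A (lft x)) (2 ^ k)
  push_cast at h3
  rw [← h3]
  exact eq_comm

end LD

/-- Lemma 2, part 2 (p = 2): if `n` is primitively represented over `ℤ_2` then
`β_2(Q;n) ≥ (1/16) · 2^(-⌊(ord_2(D(Q)) + 1)/2⌋)`. -/
theorem local_density_primitive_two
    (A : Matrix (Fin 4) (Fin 4) ℤ) (n : ℕ)
    (hA : IsGram A) (hprim : IsPrimitiveQF A) (hpd : PosDefQF A) (hn : 0 < n)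
    (h : ∃ x : Fin 4 → ℤ_[2], Qval A x = (n : ℤ_[2]) ∧ ¬ ∀ i, (2 : ℤ_[2]) ∣ x i) :
    DensityBound A 2 n
      ((1 / 16 : ℝ) * (2 : ℝ) ^ (-(((A.det.natAbs.factorization 2 + 1) / 2 : ℕ) : ℝ))) := by
  have hQ := LD.isQ_Qval hA
  have hdet : A.det ≠ 0 := by
    have h1 := hpd.det_pos
    intro h0
    have h2 : (A.map (Int.cast : ℤ → ℝ)).det = ((A.det : ℤ) : ℝ) := by
      have := RingHom.map_det (Int.castRingHom ℝ) A
      simpa using this.symm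
    rw [h2, h0] at h1
    simp at h1
  set d := A.det.natAbs.factorization 2 with hd
  have hd1 : ¬ (2 ^ (d + 1) : ℤ) ∣ A.det := by
    intro hc
    have h1 : 2 ^ (d + 1) ∣ A.det.natAbs := by
      have := Int.natAbs_dvd_natAbs.2 hc
      simpa [Int.natAbs_pow] using this
    exact Nat.pow_succ_factorization_not_dvd (Int.natAbs_ne_zero.2 hdet) Nat.prime_two h1
  have hM : ¬ (2 ^ n : ℤ) ∣ (n : ℤ) := by
    intro hc
    have h1 : 2 ^ n ∣ n := by exact_mod_cast hc
    exact absurd (Nat.le_of_dvd hn h1) (not_le.2 Nat.lt_two_pow_self)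
  obtain ⟨x, hx, hx'⟩ := h
  have hLB : LD.LB (fun x => Qval A x) n (4 + (d + 1) / 2) := by
    set z : Fin 4 → ZMod (2 ^ (n + 2)) := fun i => PadicInt.toZModPow (n + 2) (x i) with hz
    refine LD.main_all n A _ n (LD.lft z) d hQ hM ?_ ?_ hd1
    · have h1 := LD.Qval_map (PadicInt.toZModPow (p := 2) (n + 2)) A x
      rw [hx, map_natCast] at h1
      have h2 := LD.Qval_map (Int.castRingHom (ZMod (2 ^ (n + 2)))) A (LD.lft z)
      have h4 : (fun i => (Int.castRingHom (ZMod (2 ^ (n + 2)))) (LD.lft z i)) = z := LD.prj_lft z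
      rw [h4] at h2
      have h3 := ZMod.intCast_eq_intCast_iff_dvd_sub (n : ℤ) (Qval A (LD.lft z)) (2 ^ (n + 2))
      push_cast at h3
      rw [← h3]
      simp only [eq_intCast] at h2
      rw [h2, h1]
    · by_contra hc
      push Not at hc
      apply hx'
      intro i
      have h1 : PadicInt.toZModPow (n + 2) (x i - ((LD.lft z i : ℤ) : ℤ_[2])) = 0 := by
        rw [map_sub, map_intCast]
        have h4 : ((LD.lft z i : ℤ) : ZMod (2 ^ (n + 2))) = z i := congrFun (LD.prj_lft z) i
        rw [h4, hz, sub_self]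
      have h2 := RingHom.mem_ker.2 h1
      rw [PadicInt.ker_toZModPow, Ideal.mem_span_singleton] at h2
      have h3 : (2 : ℤ_[2]) ∣ x i - ((LD.lft z i : ℤ) : ℤ_[2]) := by
        refine Dvd.dvd.trans ?_ h2
        have := dvd_pow_self (2 : ℤ_[2]) (n := n + 2) (by omega)
        simpa using this
      have h5 : (2 : ℤ_[2]) ∣ ((LD.lft z i : ℤ) : ℤ_[2]) := by
        obtain ⟨t, ht⟩ := hc i
        exact ⟨t, by rw [ht]; push_cast; ring⟩
      exact (dvd_sub_left h5).1 h3
  obtain ⟨k0, hk0⟩ := hLB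
  obtain ⟨k1, hk1⟩ := LD.stable hQ (n : ℤ) (by exact_mod_cast hn.ne')
  set K := max k0 k1 with hK
  set β : ℝ := (localCount A 2 n K : ℝ) / (2 : ℝ) ^ (3 * K) with hβ
  have hconst : ∀ m, (localCount A 2 n (K + m) : ℝ) / (2 : ℝ) ^ (3 * (K + m)) = β := by
    intro m
    induction m with
    | zero => rfl
    | succ m ih =>
      rw [← ih, ← add_assoc, LD.localCount_eq, LD.localCount_eq, hk1 (K + m) (by omega),
        mul_add, pow_add]
      push_cast
      field_simp
      ring
  refine ⟨β, ?_, ?_⟩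
  · refine tendsto_const_nhds.congr' ?_
    filter_upwards [Filter.eventually_ge_atTop K] with k hk
    obtain ⟨m, rfl⟩ := Nat.exists_eq_add_of_le hk
    have := hconst m
    push_cast
    exact this.symm
  · have h1 := hk0 K (le_max_left _ _)
    rw [← LD.localCount_eq] at h1
    have h2 : (2 : ℝ) ^ (3 * K) ≤ 2 ^ (4 + (d + 1) / 2) * (localCount A 2 n K : ℝ) := by
      exact_mod_cast h1
    rw [Real.rpow_neg (by norm_num), Real.rpow_natCast, hβ, le_div_iff₀ (by positivity)]
    rw [pow_add] at h2
    have hp : (0 : ℝ) < 2 ^ ((d + 1) / 2) := by positivity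
    calc (1 / 16 : ℝ) * ((2 : ℝ) ^ ((d + 1) / 2))⁻¹ * 2 ^ (3 * K)
        ≤ (1 / 16 : ℝ) * ((2 : ℝ) ^ ((d + 1) / 2))⁻¹ *
          (2 ^ 4 * 2 ^ ((d + 1) / 2) * (localCount A 2 n K : ℝ)) := by gcongr
      _ = _ := by field_simp; norm_num
end

section
/- Let Q be a primitive positive-definite quaternary integer-valued quadratic form, let p be any prime, and let n be a positive integer. If there exists x ∈ ℤ_p⁴ with Q(x) = n (i.e. n is represented by Q over ℤ_p), then the local density β_p(Q;n) exists and satisfies β_p(Q;n) ≥ (1 − 1/p) · p^(−ord_p(n)), where ord_p(n) is the p-adic valuation of n. -/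
open scoped BigOperators

section qforms

/-- Quadratic form attached to an arbitrary integer matrix. -/
def qf {R : Type*} [CommRing R] (M : Matrix (Fin 4) (Fin 4) ℤ) (x : Fin 4 → R) : R :=
  ∑ i, ∑ j, (M i j : R) * (x i * x j)

/-- Its polar form. -/
def bf {R : Type*} [CommRing R] (M : Matrix (Fin 4) (Fin 4) ℤ) (x y : Fin 4 → R) : R :=
  ∑ i, ∑ j, (M i j : R) * (x i * y j + y i * x j)

variable {R S : Type*} [CommRing R] [CommRing S] (M : Matrix (Fin 4) (Fin 4) ℤ)

theorem qf_add (x y : Fin 4 → R) : qf M (x + y) = qf M x + bf M x y + qf M y := by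
  simp only [qf, bf, ← Finset.sum_add_distrib, Pi.add_apply]
  exact Finset.sum_congr rfl fun i _ => Finset.sum_congr rfl fun j _ => by ring

theorem qf_smul (c : R) (x : Fin 4 → R) : qf M (c • x) = c ^ 2 * qf M x := by
  simp only [qf, Finset.mul_sum, Pi.smul_apply, smul_eq_mul]
  exact Finset.sum_congr rfl fun i _ => Finset.sum_congr rfl fun j _ => by ring

theorem bf_comm (x y : Fin 4 → R) : bf M x y = bf M y x := by
  simp only [bf]
  exact Finset.sum_congr rfl fun i _ => Finset.sum_congr rfl fun j _ => by ring

theorem bf_add (x y z : Fin 4 → R) : bf M x (y + z) = bf M x y + bf M x z := by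
  simp only [bf, ← Finset.sum_add_distrib, Pi.add_apply]
  exact Finset.sum_congr rfl fun i _ => Finset.sum_congr rfl fun j _ => by ring

theorem bf_smul (c : R) (x y : Fin 4 → R) : bf M x (c • y) = c * bf M x y := by
  simp only [bf, Finset.mul_sum, Pi.smul_apply, smul_eq_mul]
  exact Finset.sum_congr rfl fun i _ => Finset.sum_congr rfl fun j _ => by ring

theorem bf_self (x : Fin 4 → R) : bf M x x = 2 * qf M x := by
  simp only [bf, qf, Finset.mul_sum]
  exact Finset.sum_congr rfl fun i _ => Finset.sum_congr rfl fun j _ => by ring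

theorem bf_zero (x : Fin 4 → R) : bf M x 0 = 0 := by
  simp [bf]

theorem qf_zero : qf M (0 : Fin 4 → R) = 0 := by
  simp [qf]

theorem map_qf (f : R →+* S) (x : Fin 4 → R) : f (qf M x) = qf M (fun i => f (x i)) := by
  simp [qf]

theorem map_bf (f : R →+* S) (x y : Fin 4 → R) :
    f (bf M x y) = bf M (fun i => f (x i)) (fun i => f (y i)) := by
  simp [bf]

theorem qf_add_smul (w e : Fin 4 → R) (t : R) :
    qf M (w + t • e) = qf M w + t * bf M e w + t ^ 2 * qf M e := by
  rw [qf_add, qf_smul, bf_smul, bf_comm]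

/-- casting integer vectors -/
def cv (R : Type*) [CommRing R] (x : Fin 4 → ℤ) : Fin 4 → R := fun i => (x i : R)

theorem cv_add (x y : Fin 4 → ℤ) : cv R (x + y) = cv R x + cv R y := by
  funext i; simp [cv]

theorem cv_sub (x y : Fin 4 → ℤ) : cv R (x - y) = cv R x - cv R y := by
  funext i; simp [cv]

theorem cv_smul (c : ℤ) (x : Fin 4 → ℤ) : cv R (c • x) = (c : R) • cv R x := by
  funext i; simp [cv]

theorem qf_cv (x : Fin 4 → ℤ) : qf M (cv R x) = ((qf M x : ℤ) : R) :=
  (map_qf M (Int.castRingHom R) x).symm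

theorem bf_cv (x y : Fin 4 → ℤ) : bf M (cv R x) (cv R y) = ((bf M x y : ℤ) : R) :=
  (map_bf M (Int.castRingHom R) x y).symm

theorem exists_lift (m : ℕ) (x : Fin 4 → ZMod m) : ∃ y : Fin 4 → ℤ, cv (ZMod m) y = x := by
  choose y hy using fun i => ZMod.intCast_surjective (x i)
  exact ⟨y, funext hy⟩

theorem cv_eq_iff (m : ℕ) (x y : Fin 4 → ℤ) :
    cv (ZMod m) x = cv (ZMod m) y ↔ ∃ z : Fin 4 → ℤ, x - y = (m : ℤ) • z := by
  constructor
  · intro h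
    have : ∀ i, ∃ z : ℤ, x i - y i = m * z := by
      intro i
      have h1 : (x i : ZMod m) = y i := congrFun h i
      have := (ZMod.intCast_eq_intCast_iff_dvd_sub _ _ _).1 h1.symm
      exact this
    choose z hz using this
    exact ⟨z, funext fun i => by simpa using hz i⟩
  · rintro ⟨z, hz⟩
    have : x = y + (m : ℤ) • z := by rw [← hz]; abel
    rw [this, cv_add, cv_smul]
    simp

/-- divide all the coefficients of a form -/
theorem qf_div (d : ℤ) (hd : ∀ x : Fin 4 → ℤ, d ∣ qf M x) :
    ∃ M' : Matrix (Fin 4) (Fin 4) ℤ, ∀ x : Fin 4 → ℤ, qf M x = d * qf M' x := by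
  have h1 : ∀ i, d ∣ M i i := by
    intro i
    have := hd (Pi.single i 1)
    simpa [qf, Pi.single_apply] using this
  have h2 : ∀ i j, d ∣ M i j + M j i := by
    intro i j
    have e := qf_add M (Pi.single i 1 : Fin 4 → ℤ) (Pi.single j 1)
    have h3 : bf M (Pi.single i 1 : Fin 4 → ℤ) (Pi.single j 1) = M i j + M j i := by
      simp [bf, Pi.single_apply, mul_add, Finset.sum_add_distrib]
    rw [← h3]
    have : bf M (Pi.single i 1 : Fin 4 → ℤ) (Pi.single j 1) = qf M (Pi.single i 1 + Pi.single j 1 : Fin 4 → ℤ) - qf M (Pi.single i 1 : Fin 4 → ℤ) - qf M (Pi.single j 1 : Fin 4 → ℤ) := by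
      rw [e]; ring
    rw [this]
    exact dvd_sub (dvd_sub (hd _) (hd _)) (hd _)
  choose a ha using h1
  choose b hb using h2
  refine ⟨fun i j => if i = j then a i else if i < j then b i j else 0, fun x => ?_⟩
  have b01 := hb 0 1
  have b02 := hb 0 2
  have b03 := hb 0 3
  have b12 := hb 1 2
  have b13 := hb 1 3
  have b23 := hb 2 3
  have a0 := ha 0
  have a1 := ha 1
  have a2 := ha 2
  have a3 := ha 3
  simp only [qf, Fin.sum_univ_four]
  simp
  linear_combination (x 0 * x 1) * b01 + (x 0 * x 2) * b02 + (x 0 * x 3) * b03 + (x 1 * x 2) * b12 + (x 1 * x 3) * b13 + (x 2 * x 3) * b23 + x 0 ^ 2 * a0 + x 1 ^ 2 * a1 + x 2 ^ 2 * a2 + x 3 ^ 2 * a3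

end qforms

section counting

/-- covering by injective maps -/
theorem card_le_of_family {ι α β : Type*} [Fintype ι] [DecidableEq β] [DecidableEq α]
    (T : Finset α) (S : Finset β) (σ : ι → α → β) (hσ : ∀ i, Function.Injective (σ i))
    (h : ∀ w ∈ T, ∃ i, σ i w ∈ S) : T.card ≤ Fintype.card ι * S.card := by
  classical
  have hsub : T ⊆ Finset.univ.biUnion fun i => S.preimage (σ i) (hσ i).injOn := by
    intro w hw
    obtain ⟨i, hi⟩ := h w hw
    simp only [Finset.mem_biUnion, Finset.mem_preimage]
    exact ⟨i, Finset.mem_univ _, hi⟩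
  refine (Finset.card_le_card hsub).trans ?_
  refine Finset.card_biUnion_le_card_mul _ _ _ fun i _ => ?_
  refine Finset.card_le_card_of_injOn (σ i) (fun x hx => by simpa using hx) (hσ i).injOn

theorem card_fiber {G H : Type*} [AddGroup G] [AddGroup H] [Fintype G] [Fintype H]
    [DecidableEq H] (φ : G →+ H) (x₀ : G) :
    Fintype.card G ≤ Fintype.card H * (Finset.univ.filter fun x => φ x = φ x₀).card := by
  classical
  have := Finset.card_le_mul_card_image_of_maps_to (s := (Finset.univ : Finset G)) (t := (Finset.univ : Finset H)) (f := φ) (fun _ _ => Finset.mem_univ _) (Finset.univ.filter fun x => φ x = φ x₀).card ?_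
  · simpa [mul_comm] using this
  · intro b _
    by_cases hb : ∃ y, φ y = b
    · obtain ⟨y, rfl⟩ := hb
      refine Finset.card_le_card_of_injOn (fun x => x - y + x₀) ?_ ?_
      · intro x hx
        simp only [Finset.coe_filter, Finset.mem_univ, true_and, Set.mem_ofPred_eq] at hx ⊢
        simp [hx]
      · intro a _ b _ hab
        simpa using hab
    · rw [Finset.filter_false_of_mem]
      · simp
      · intro x _ hx; exact hb ⟨x, hx⟩

theorem card_preimage {G H : Type*} [AddGroup G] [AddGroup H] [Fintype G] [Fintype H]
    [DecidableEq H] (φ : G →+ H) (hφ : Function.Surjective φ) (P : H → Prop) [DecidablePred P] :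
    (Finset.univ.filter fun x => P (φ x)).card * Fintype.card H
      = (Finset.univ.filter P).card * Fintype.card G := by
  classical
  have key : ∀ b : H, (Finset.univ.filter fun x => φ x = b).card
      = (Finset.univ.filter fun x => φ x = 0).card := by
    intro b
    obtain ⟨y, rfl⟩ := hφ b
    refine Finset.card_bij (fun x _ => x - y) ?_ ?_ ?_
    · intro x hx
      simp only [Finset.mem_filter, Finset.mem_univ, true_and] at hx ⊢
      simp [hx]
    · intro a _ b _ hab
      simpa using hab
    · intro a ha
      simp only [Finset.mem_filter, Finset.mem_univ, true_and] at ha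
      exact ⟨a + y, by simp [ha], by simp⟩
  have gen : ∀ (P : H → Prop) [DecidablePred P], (Finset.univ.filter fun x => P (φ x)).card
      = (Finset.univ.filter P).card * (Finset.univ.filter fun x => φ x = 0).card := by
    intro P _
    rw [Finset.card_eq_sum_card_fiberwise (f := φ) (t := Finset.univ.filter P)]
    · rw [Finset.sum_const_nat]
      intro b hb
      rw [← key b, Finset.filter_filter]
      congr 1
      ext x
      simp only [Finset.mem_filter, Finset.mem_univ, true_and] at hb ⊢
      constructor
      · exact fun h => h.2
      · exact fun h => ⟨h ▸ hb, h⟩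
    · intro x hx
      simpa using hx
  rw [gen P]
  have h2 := gen (fun _ => True)
  simp only [Finset.filter_true, Finset.card_univ] at h2
  rw [h2]; ring

end counting

section stepping

theorem isUnit_int (p : ℕ) [hp : Fact p.Prime] (k : ℕ) (hk : k ≠ 0) (a : ℤ) :
    IsUnit ((a : ℤ) : ZMod (p ^ k)) ↔ ¬ (p : ℤ) ∣ a := by
  rw [ZMod.coe_int_isUnit_iff_isCoprime]
  push_cast
  rw [IsCoprime.pow_left_iff (Nat.pos_of_ne_zero hk), Prime.coprime_iff_not_dvd]
  exact Nat.prime_iff_prime_int.1 hp.out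

/-- number of solutions modulo `p ^ k` -/
def NN (M : Matrix (Fin 4) (Fin 4) ℤ) (p : ℕ) [Fact p.Prime] (n : ℤ) (k : ℕ) : ℕ :=
  (Finset.univ.filter fun x : Fin 4 → ZMod (p ^ k) => qf M x = (n : ZMod (p ^ k))).card

theorem exists_sq (p : ℕ) [hp : Fact p.Prime] (n u : ℤ) (v k : ℕ) (hn : n = p ^ v * u)
    (hu : ¬ (p : ℤ) ∣ u) (hk : v + 3 ≤ k) (s : ℤ) :
    ∃ t : ℤ, ¬ (p : ℤ) ∣ t ∧ (p : ℤ) ^ (k + 1) ∣ n * t ^ 2 - (n + p ^ k * s) := by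
  obtain ⟨j, rfl⟩ := Nat.exists_eq_add_of_le hk
  have hpp := Nat.prime_iff_prime_int.1 hp.out
  by_cases h2 : p = 2
  · subst h2
    refine ⟨1 + 2 ^ (j + 2) * s, ?_, ?_⟩
    · push_cast
      intro h
      have h1 : (2 : ℤ) ∣ 2 ^ (j + 2) * s := Dvd.dvd.mul_right (dvd_pow_self _ (by omega)) _
      have := (dvd_add_left h1).1 h
      omega
    · have hu' : ∃ w, u = 2 * w + 1 := ⟨u / 2, by push_cast at hu; omega⟩
      obtain ⟨w, rfl⟩ := hu'
      refine ⟨w * s + 2 ^ j * (2 * w + 1) * s ^ 2, ?_⟩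
      rw [hn]; push_cast
      ring
  · have h2' : ¬ (p : ℤ) ∣ 2 * u := by
      intro h
      rcases hpp.dvd_or_dvd h with h | h
      · have : p ∣ 2 := by exact_mod_cast h
        exact h2 ((Nat.prime_dvd_prime_iff_eq hp.out Nat.prime_two).1 this)
      · exact hu h
    have hc := (Prime.coprime_iff_not_dvd hpp).2 h2'
    obtain ⟨a, b, hab⟩ := hc
    refine ⟨1 + p ^ (j + 3) * (b * s), ?_, ?_⟩
    · intro h
      have h1 : (p : ℤ) ∣ p ^ (j + 3) * (b * s) :=
        Dvd.dvd.mul_right (dvd_pow_self _ (by omega)) _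
      have := (dvd_add_left h1).1 h
      exact hpp.not_dvd_one this
    · refine ⟨- a * s + p ^ (j + 2) * u * (b * s) ^ 2, ?_⟩
      rw [hn]
      have : b * (2 * u) = 1 - a * p := by linarith
      linear_combination ((p : ℤ) ^ (v + 3 + j) * s) * this

/-- reduction of vectors -/
noncomputable def redv (p a b : ℕ) (h : a ≤ b) :
    (Fin 4 → ZMod (p ^ b)) →+ (Fin 4 → ZMod (p ^ a)) :=
  ((ZMod.castHom (pow_dvd_pow p h) (ZMod (p ^ a))).toAddMonoidHom).compLeft (Fin 4)

theorem redv_cv (p a b : ℕ) (h : a ≤ b) (x : Fin 4 → ℤ) :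
    redv p a b h (cv _ x) = cv _ x := by
  funext i
  simp [redv, cv]

theorem redv_surj (p a b : ℕ) (h : a ≤ b) : Function.Surjective (redv p a b h) := by
  intro y
  obtain ⟨x, rfl⟩ := exists_lift _ y
  exact ⟨_, redv_cv p a b h x⟩

theorem NN_lift (M : Matrix (Fin 4) (Fin 4) ℤ) (p : ℕ) [hp : Fact p.Prime] (n : ℤ) (a c : ℕ) :
    (Finset.univ.filter fun x : Fin 4 → ZMod (p ^ (a + c)) =>
      qf M (redv p a (a + c) (Nat.le_add_right _ _) x) = (n : ZMod (p ^ a))).card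
      = p ^ (4 * c) * NN M p n a := by
  have := card_preimage (redv p a (a + c) (Nat.le_add_right _ _)) (redv_surj _ _ _ _)
    (fun y => qf M y = (n : ZMod (p ^ a)))
  rw [Fintype.card_fun, Fintype.card_fun, ZMod.card, ZMod.card, Fintype.card_fin] at this
  have hpos : 0 < (p ^ a) ^ 4 := by have := hp.out.pos; positivity
  apply Nat.eq_of_mul_eq_mul_right hpos
  rw [this, NN]
  ring

theorem cast_eq_iff (p k : ℕ) (a b : ℤ) :
    ((a : ℤ) : ZMod (p ^ k)) = b ↔ (p : ℤ) ^ k ∣ a - b := by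
  rw [eq_comm, ZMod.intCast_eq_intCast_iff_dvd_sub]
  push_cast
  rfl

theorem NN_step (M : Matrix (Fin 4) (Fin 4) ℤ) (p : ℕ) [hp : Fact p.Prime] (n u : ℤ) (v k : ℕ)
    (hn : n = p ^ v * u) (hu : ¬ (p : ℤ) ∣ u) (hk : v + 3 ≤ k) :
    NN M p n (k + 1) = p ^ 3 * NN M p n k := by
  have hp0 : (p : ℤ) ≠ 0 := by exact_mod_cast hp.out.ne_zero
  have h1 := NN_lift M p n k 1
  have h2 : p * NN M p n (k + 1) = (Finset.univ.filter fun x : Fin 4 → ZMod (p ^ (k + 1)) =>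
      qf M (redv p k (k + 1) (Nat.le_add_right _ _) x) = (n : ZMod (p ^ k))).card := by
    choose t ht1 ht2 using exists_sq p n u v k hn hu hk
    have htu : ∀ s, IsUnit ((t s : ℤ) : ZMod (p ^ (k + 1))) :=
      fun s => (isUnit_int p (k + 1) (by omega) _).2 (ht1 s)
    have hval : ∀ s, (n : ZMod (p ^ (k + 1))) * (t s : ZMod (p ^ (k + 1))) ^ 2
        = ((n + p ^ k * s : ℤ) : ZMod (p ^ (k + 1))) := by
      intro s
      have := (cast_eq_iff p (k + 1) _ _).2 (ht2 s)
      rw [← this]; push_cast; ring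
    have hc : p * NN M p n (k + 1) = ((Finset.univ : Finset (Fin p)) ×ˢ
      (Finset.univ.filter fun x : Fin 4 → ZMod (p ^ (k + 1)) =>
        qf M x = (n : ZMod (p ^ (k + 1))))).card := by
      rw [Finset.card_product, NN]; simp
    rw [hc]
    refine Finset.card_bij (fun sx _ => ((t (sx.1 : ℕ) : ℤ) : ZMod (p ^ (k + 1))) • sx.2) ?_ ?_ ?_
    · rintro ⟨s, x⟩ hx
      simp only [Finset.mem_product, Finset.mem_filter, Finset.mem_univ, true_and] at hx ⊢
      have e : qf M (((t (s : ℕ) : ℤ) : ZMod (p ^ (k + 1))) • x)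
          = ((n + p ^ k * (s : ℕ) : ℤ) : ZMod (p ^ (k + 1))) := by
        rw [qf_smul, hx, ← hval]; ring
      obtain ⟨y, hy⟩ := exists_lift _ (((t (s : ℕ) : ℤ) : ZMod (p ^ (k + 1))) • x)
      rw [← hy] at e ⊢
      rw [redv_cv, qf_cv, cast_eq_iff]
      rw [qf_cv, cast_eq_iff] at e
      have e' := (pow_dvd_pow (p : ℤ) (Nat.le_succ k)).trans e
      have : qf M y - n = (qf M y - (n + p ^ k * (s : ℕ))) + p ^ k * (s : ℕ) := by ring
      rw [this]
      exact dvd_add e' (dvd_mul_right _ _)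
    · rintro ⟨s, x⟩ hx ⟨s', x'⟩ hx' hxx
      simp only [Finset.mem_product, Finset.mem_filter, Finset.mem_univ, true_and] at hx hx' hxx
      have e : ∀ (s : Fin p) x, qf M x = (n : ZMod (p ^ (k + 1))) →
          qf M (((t (s : ℕ) : ℤ) : ZMod (p ^ (k + 1))) • x)
          = ((n + p ^ k * (s : ℕ) : ℤ) : ZMod (p ^ (k + 1))) := by
        intro s x hx
        rw [qf_smul, hx, ← hval]; ring
      have e1 := e s x hx
      rw [hxx, e s' x' hx', cast_eq_iff] at e1
      have e2 : (p : ℤ) ^ k * p ∣ p ^ k * ((s' : ℕ) - (s : ℕ) : ℤ) := by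
        have e4 : (p : ℤ) ^ k * ((s' : ℕ) - (s : ℕ) : ℤ)
            = n + p ^ k * (s' : ℕ) - (n + p ^ k * (s : ℕ)) := by ring
        rw [e4, ← pow_succ]
        exact e1
      have e3 := (mul_dvd_mul_iff_left (pow_ne_zero k hp0)).1 e2
      have hs : s = s' := by
        have a1 := s.2
        have a2 := s'.2
        have := Int.eq_zero_of_abs_lt_dvd e3 (by rw [abs_lt]; constructor <;> omega)
        ext; omega
      subst hs
      have := (htu (s : ℕ)).smul_left_cancel.1 hxx
      rw [this]
    · intro y hy
      simp only [Finset.mem_filter, Finset.mem_univ, true_and] at hy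
      obtain ⟨z, rfl⟩ := exists_lift _ y
      rw [redv_cv, qf_cv, cast_eq_iff] at hy
      obtain ⟨w, hw⟩ := hy
      have hpz : (0 : ℤ) < p := by exact_mod_cast hp.out.pos
      have hs0 : 0 ≤ w % p := Int.emod_nonneg _ hp0
      have hs1 : w % p < p := Int.emod_lt_of_pos _ hpz
      let s : Fin p := ⟨(w % p).toNat, by omega⟩
      have hss : ((s : ℕ) : ℤ) = w % p := by simp [s, hs0]
      obtain ⟨un, hun⟩ := htu (s : ℕ)
      refine ⟨⟨s, un⁻¹.val • cv _ z⟩, ?_, ?_⟩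
      · simp only [Finset.mem_product, Finset.mem_filter, Finset.mem_univ, true_and]
        rw [qf_smul, qf_cv]
        have h3 : ((qf M z : ℤ) : ZMod (p ^ (k + 1))) = ((n + p ^ k * (s : ℕ) : ℤ) : ZMod (p ^ (k + 1))) := by
          rw [cast_eq_iff]
          refine ⟨w / p, ?_⟩
          have := Int.emod_add_mul_ediv w p
          rw [hss]
          linear_combination hw - (p : ℤ) ^ k * this
        rw [h3, ← hval, ← hun]
        calc _ = (n : ZMod (p ^ (k + 1))) * (un⁻¹.val * un.val) ^ 2 := by ring
          _ = _ := by simp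
      · simp only
        rw [← hun, smul_smul]
        simp
  have h3 : p * NN M p n (k + 1) = p * (p ^ 3 * NN M p n k) := by
    rw [h2, h1]; ring
  exact Nat.eq_of_mul_eq_mul_left hp.out.pos h3

end stepping

section unitcases

theorem card_units_fiber (p : ℕ) [hp : Fact p.Prime] (M : Matrix (Fin 4) (Fin 4) ℤ) (k : ℕ)
    (hk : k ≠ 0) (e f : Fin 4 → ℤ) (hef : ¬ (p : ℤ) ∣ bf M e f) :
    (p - 1) * p ^ (4 * k) ≤ p * (Finset.univ.filter fun w : Fin 4 → ZMod (p ^ k) =>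
      (ZMod.castHom (dvd_pow_self p hk) (ZMod p)) (bf M (cv _ e) w) ≠ 0).card := by
  classical
  let φ : (Fin 4 → ZMod (p ^ k)) →+ ZMod p :=
    { toFun := fun w => (ZMod.castHom (dvd_pow_self p hk) (ZMod p)) (bf M (cv _ e) w)
      map_zero' := by rw [bf_zero, map_zero]
      map_add' := fun x y => by rw [bf_add, map_add] }
  have hsurj : Function.Surjective φ := by
    intro a
    have hne : ((bf M e f : ℤ) : ZMod p) ≠ 0 := by
      rwa [Ne, ZMod.intCast_zmod_eq_zero_iff_dvd]
    obtain ⟨c, hc⟩ := ZMod.intCast_surjective (a / ((bf M e f : ℤ) : ZMod p))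
    refine ⟨cv _ (c • f), ?_⟩
    change (ZMod.castHom (dvd_pow_self p hk) (ZMod p)) (bf M (cv _ e) (cv _ (c • f))) = a
    rw [bf_cv, map_intCast, bf_smul, Int.cast_mul, hc, div_mul_cancel₀ _ hne]
  have := card_preimage φ hsurj (fun a => a ≠ 0)
  rw [Fintype.card_fun, ZMod.card, ZMod.card, Fintype.card_fin] at this
  have h0 : (Finset.univ.filter fun a : ZMod p => a ≠ 0).card = p - 1 := by
    rw [Finset.filter_ne', Finset.card_erase_of_mem (Finset.mem_univ _), Finset.card_univ, ZMod.card]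
  rw [h0] at this
  change _ ≤ p * (Finset.univ.filter fun w => φ w ≠ 0).card
  rw [mul_comm p, this]
  apply le_of_eq
  ring

theorem unit_of_ne (p : ℕ) [hp : Fact p.Prime] (k : ℕ) (hk : k ≠ 0) (a : ZMod (p ^ k)) :
    (ZMod.castHom (dvd_pow_self p hk) (ZMod p)) a ≠ 0 ↔ IsUnit a := by
  obtain ⟨z, rfl⟩ := ZMod.intCast_surjective a
  rw [isUnit_int p k hk, map_intCast, Ne, ZMod.intCast_zmod_eq_zero_iff_dvd]

theorem caseI (p : ℕ) [hp : Fact p.Prime] (M : Matrix (Fin 4) (Fin 4) ℤ) (k : ℕ)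
    (hk : k ≠ 0) (e f : Fin 4 → ℤ) (hef : ¬ (p : ℤ) ∣ bf M e f) (he : (p : ℤ) ∣ qf M e) (n : ℤ) :
    (p - 1) * p ^ (3 * k) ≤ NN M p n k * p := by
  classical
  have h1 := card_units_fiber p M k hk e f hef
  set T := Finset.univ.filter fun w : Fin 4 → ZMod (p ^ k) =>
      (ZMod.castHom (dvd_pow_self p hk) (ZMod p)) (bf M (cv _ e) w) ≠ 0 with hT
  have h2 : T.card ≤ Fintype.card (ZMod (p ^ k)) * NN M p n k := by
    refine card_le_of_family T _ (fun (t : ZMod (p ^ k)) w => w + t • cv _ e) ?_ ?_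
    · intro t a b hab
      simpa using hab
    · intro w hw
      simp only [hT, Finset.mem_filter, Finset.mem_univ, true_and] at hw ⊢
      have hb := (unit_of_ne p k hk _).1 hw
      have hnil : IsNilpotent (qf M (cv (ZMod (p ^ k)) e)) := by
        obtain ⟨c, hc⟩ := he
        refine ⟨k, ?_⟩
        rw [qf_cv, hc]
        push_cast
        rw [mul_pow]
        have : (p : ZMod (p ^ k)) ^ k = 0 := by exact_mod_cast ZMod.natCast_self (p ^ k)
        rw [this, zero_mul]
      have hinj : Function.Injective fun t : ZMod (p ^ k) =>
          t * bf M (cv _ e) w + t ^ 2 * qf M (cv (ZMod (p ^ k)) e) := by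
        intro t s hts
        have hu : IsUnit ((t + s) * qf M (cv (ZMod (p ^ k)) e) + bf M (cv _ e) w) :=
          IsNilpotent.isUnit_add_right_of_commute (Commute.isNilpotent_mul_left (Commute.all _ _) hnil) hb (Commute.all _ _)
        have : (t - s) * ((t + s) * qf M (cv (ZMod (p ^ k)) e) + bf M (cv _ e) w) = 0 := by
          simp only at hts
          linear_combination hts
        exact sub_eq_zero.1 ((hu.mul_left_eq_zero).1 this)
      obtain ⟨t, ht⟩ := (Finite.surjective_of_injective hinj) ((n : ZMod (p ^ k)) - qf M w)
      refine ⟨t, ?_⟩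
      rw [qf_add_smul]
      simp only at ht
      linear_combination ht
  rw [ZMod.card] at h2
  have hpos : 0 < p ^ k := pow_pos hp.out.pos _
  apply Nat.le_of_mul_le_mul_left _ hpos
  calc p ^ k * ((p - 1) * p ^ (3 * k)) = (p - 1) * p ^ (4 * k) := by ring
    _ ≤ p * T.card := h1
    _ ≤ p * (p ^ k * NN M p n k) := Nat.mul_le_mul_left _ h2
    _ = _ := by ring

theorem caseJ (p : ℕ) [hp : Fact p.Prime] (M : Matrix (Fin 4) (Fin 4) ℤ) (k : ℕ)
    (hk : k ≠ 0) (hI : ∀ e f : Fin 4 → ℤ, (p : ℤ) ∣ qf M e → (p : ℤ) ∣ bf M e f) (n : ℤ)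
    (x f : Fin 4 → ℤ) (hx : (p : ℤ) ^ k ∣ qf M x - n) (hxf : ¬ (p : ℤ) ∣ bf M x f) :
    (p - 1) * p ^ (3 * k) ≤ NN M p n k * p := by
  classical
  have h1 := card_units_fiber p M k hk x f hxf
  set T := Finset.univ.filter fun w : Fin 4 → ZMod (p ^ k) =>
      (ZMod.castHom (dvd_pow_self p hk) (ZMod p)) (bf M (cv _ x) w) ≠ 0 with hT
  have h2 : T.card ≤ Fintype.card (ZMod (p ^ k))ˣ * NN M p n k := by
    refine card_le_of_family T _ (fun (t : (ZMod (p ^ k))ˣ) w => cv _ x + (- t.val) • w) ?_ ?_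
    · intro t a b hab
      simp only [neg_smul, add_right_inj, neg_inj] at hab
      exact t.isUnit.smul_left_cancel.1 hab
    · intro w hw
      simp only [hT, Finset.mem_filter, Finset.mem_univ, true_and] at hw ⊢
      have hb := (unit_of_ne p k hk _).1 hw
      have hq : IsUnit (qf M w) := by
        obtain ⟨z, rfl⟩ := exists_lift _ w
        rw [qf_cv, isUnit_int p k hk]
        rw [bf_cv, isUnit_int p k hk] at hb
        intro h
        exact hb (by rw [bf_comm]; exact hI z x h)
      obtain ⟨b, hb⟩ := hb
      obtain ⟨q, hq⟩ := hq
      refine ⟨b * q⁻¹, ?_⟩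
      have hxn : qf M (cv (ZMod (p ^ k)) x) = n := by rw [qf_cv, cast_eq_iff]; exact hx
      rw [qf_add_smul, hxn, bf_comm, ← hb, ← hq, Units.val_mul]
      have : (q⁻¹.val) * q.val = 1 := by simp
      linear_combination (b.val ^ 2 * q⁻¹.val) * this
  have h3 : Fintype.card (ZMod (p ^ k))ˣ ≤ p ^ k := by
    exact (Fintype.card_le_of_injective _ Units.val_injective).trans (ZMod.card (p ^ k)).le
  have hpos : 0 < p ^ k := pow_pos hp.out.pos _
  apply Nat.le_of_mul_le_mul_left _ hpos
  calc p ^ k * ((p - 1) * p ^ (3 * k)) = (p - 1) * p ^ (4 * k) := by ring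
    _ ≤ p * T.card := h1
    _ ≤ p * (p ^ k * NN M p n k) := Nat.mul_le_mul_left _ (h2.trans (Nat.mul_le_mul_right _ h3))
    _ = _ := by ring

end unitcases

section two

theorem dec1 : ∀ a : ZMod 8, ZMod.castHom (by norm_num : 2 ∣ 8) (ZMod 2) a = 0 → 4 * a = 0 := by
  decide

theorem dec2 : ∀ a n b c : ZMod 8, ZMod.castHom (by norm_num : 2 ∣ 8) (ZMod 2) a = 1 →
    ZMod.castHom (by norm_num : 2 ∣ 8) (ZMod 2) n = 1 →
    ZMod.castHom (by norm_num : 2 ∣ 8) (ZMod 2) b = 1 → 2 * c = 0 →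
    ∃ t : Fin 4, a + 2 * ((t : ℕ) : ZMod 8) * b + ((t : ℕ) : ZMod 8) ^ 2 * c = n := by
  set_option maxRecDepth 100000 in decide

theorem dec3 : ∀ b c : ZMod 8, ZMod.castHom (by norm_num : 2 ∣ 8) (ZMod 2) b = 1 →
    ZMod.castHom (by norm_num : 2 ∣ 8) (ZMod 2) c = 0 → ¬ 2 * c = 0 →
    2 * b + c = 0 ∨ 6 * b + 9 * c = 0 := by
  set_option maxRecDepth 100000 in decide

theorem dec4 : ∀ a b : Fin 4, 2 * ((a : ℕ) : ZMod 8) = 2 * ((b : ℕ) : ZMod 8) → a = b := by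
  set_option maxRecDepth 100000 in decide

theorem zmod2 : ∀ a : ZMod 2, a = 0 ∨ a = 1 := by decide

theorem two_abstract (q : (Fin 4 → ZMod 8) → ZMod 8) (h : (Fin 4 → ZMod 8) → (Fin 4 → ZMod 8) → ZMod 8)
    (hq : ∀ x y, q (x + y) = q x + 2 * h x y + q y)
    (hadd : ∀ x y z, h x (y + z) = h x y + h x z)
    (hsmul : ∀ x (c : ZMod 8) y, h x (c • y) = c * h x y)
    (hcomm : ∀ x y, h x y = h y x) (hself : ∀ x, h x x = q x)
    (x₀ : Fin 4 → ZMod 8) (hx₀ : ZMod.castHom (by norm_num : 2 ∣ 8) (ZMod 2) (q x₀) = 1) :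
    256 ≤ (Finset.univ.filter fun x => q x = q x₀).card := by
  classical
  set π : ZMod 8 →+* ZMod 2 := ZMod.castHom (by norm_num : 2 ∣ 8) (ZMod 2) with hπ
  have h2 : π 2 = 0 := by rw [hπ]; decide
  have hqs : ∀ (c : ZMod 8) y, q (c • y) = c ^ 2 * q y := by
    intro c y
    rw [← hself, hsmul, hcomm, hsmul, hself]; ring
  have hπq : ∀ x y, π (q (x + y)) = π (q x) + π (q y) := by
    intro x y
    rw [hq, map_add, map_add, map_mul, h2]; ring
  have h0 : ∀ x, h x 0 = 0 := by
    intro x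
    have := hsmul x 0 0
    simpa using this
  have q0 : q 0 = 0 := by rw [← hself, h0]
  have hT : ∀ e y, 1024 ≤ (Finset.univ.filter fun w => π (q w) = π (q y) ∧ π (h e w) = π (h e y)).card := by
    intro e y
    let φ : (Fin 4 → ZMod 8) →+ ZMod 2 × ZMod 2 :=
      { toFun := fun w => (π (q w), π (h e w))
        map_zero' := by rw [q0, h0, map_zero]; rfl
        map_add' := fun x y => by rw [hπq, hadd, map_add]; rfl }
    have := card_fiber φ y
    rw [Fintype.card_prod, Fintype.card_fun, ZMod.card, ZMod.card, Fintype.card_fin] at this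
    have e1 : (Finset.univ.filter fun x => φ x = φ y)
        = (Finset.univ.filter fun w => π (q w) = π (q y) ∧ π (h e w) = π (h e y)) := by
      ext w
      simp only [Finset.mem_filter, Finset.mem_univ, true_and]
      exact Prod.ext_iff
    rw [e1] at this
    omega
  by_cases c1 : ∀ y, π (q y) = 0 → π (h x₀ y) = 0
  · have hl : ∀ l, π (h x₀ l + q l) = 0 := by
      intro l
      rcases zmod2 (π (q l)) with h1 | h1
      · rw [map_add, c1 l h1, h1]; rfl
      · have e1 : π (q (l + x₀)) = 0 := by rw [hπq, h1, hx₀]; rfl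
        have := c1 _ e1
        rw [hadd, map_add, hself, hx₀] at this
        rw [map_add, h1, this]
    have : (Finset.univ : Finset (Fin 4 → Fin 4)).card ≤ (Finset.univ.filter fun x => q x = q x₀).card := by
      refine Finset.card_le_card_of_injOn (fun l => x₀ + (2 : ZMod 8) • (fun i => ((l i : ℕ) : ZMod 8))) ?_ ?_
      · intro l _
        simp only [Finset.coe_filter, Finset.mem_univ, true_and, Set.mem_ofPred_eq]
        have e := dec1 _ (hl (fun i => ((l i : ℕ) : ZMod 8)))
        rw [hq, hsmul, hqs]
        linear_combination e
      · intro l _ l' _ hll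
        funext i
        apply dec4
        have := congrFun hll i
        simpa using this
    simpa using this
  push Not at c1
  obtain ⟨e, he0, he1⟩ := c1
  have he1 : π (h x₀ e) = 1 := (zmod2 _).resolve_left he1
  by_cases c2 : ∃ e, π (q e) = 0 ∧ π (h x₀ e) = 1 ∧ 2 * q e = 0
  · obtain ⟨e, he0, he1, he2⟩ := c2
    have hc := hT e x₀
    have := card_le_of_family (Finset.univ.filter fun w => π (q w) = π (q x₀) ∧ π (h e w) = π (h e x₀))
      (Finset.univ.filter fun x => q x = q x₀) (fun (t : Fin 4) w => w + ((t : ℕ) : ZMod 8) • e) ?_ ?_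
    · rw [Fintype.card_fin] at this
      omega
    · intro t a b hab
      simpa using hab
    · intro w hw
      simp only [Finset.mem_filter, Finset.mem_univ, true_and] at hw ⊢
      obtain ⟨w1, w2⟩ := hw
      rw [hx₀] at w1
      rw [hcomm e x₀, he1] at w2
      obtain ⟨t, ht⟩ := dec2 (q w) (q x₀) (h e w) (q e) w1 hx₀ w2 he2
      refine ⟨t, ?_⟩
      rw [hq, hsmul, hqs, hcomm w e, ← ht]; ring
  · have hc := hT x₀ (x₀ + e)
    have := card_le_of_family (Finset.univ.filter fun w => π (q w) = π (q (x₀ + e)) ∧ π (h x₀ w) = π (h x₀ (x₀ + e)))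
      (Finset.univ.filter fun x => q x = q x₀)
      (fun (t : Bool) w => x₀ + (if t then (1 : ZMod 8) else 3) • (w - x₀)) ?_ ?_
    · rw [Fintype.card_bool] at this
      omega
    · intro t a b hab
      have hu : IsUnit (if t then (1 : ZMod 8) else 3) := by
        cases t
        · exact ⟨⟨3, 3, by decide, by decide⟩, rfl⟩
        · exact isUnit_one
      simp only [add_right_inj] at hab
      have := hu.smul_left_cancel.1 hab
      simpa using this
    · intro w hw
      obtain ⟨y, rfl⟩ : ∃ y, w = x₀ + y := ⟨w - x₀, by abel⟩
      simp only [Finset.mem_filter, Finset.mem_univ, true_and, hπq, hadd, map_add, add_right_inj] at hw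
      obtain ⟨w1, w2⟩ := hw
      rw [he0] at w1
      rw [he1] at w2
      have w3 : ¬ 2 * q y = 0 := fun hh => c2 ⟨y, w1, w2, hh⟩
      rcases dec3 _ _ w2 w1 w3 with h3 | h3
      · refine ⟨true, ?_⟩
        simp only [Finset.mem_filter, Finset.mem_univ, true_and, if_true, one_smul, add_sub_cancel_left]
        rw [hq]; linear_combination h3
      · refine ⟨false, ?_⟩
        simp only [Finset.mem_filter, Finset.mem_univ, true_and, add_sub_cancel_left]
        rw [hq, hsmul, hqs]
        simp only [Bool.false_eq_true, if_false]
        linear_combination h3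

/-- bilinear form of an integer matrix -/
def hf {R : Type*} [CommRing R] (K : Matrix (Fin 4) (Fin 4) ℤ) (x y : Fin 4 → R) : R :=
  ∑ i, ∑ j, (K i j : R) * (x i * y j)

theorem case_two [Fact (Nat.Prime 2)] (M : Matrix (Fin 4) (Fin 4) ℤ)
    (hB : ∀ e f : Fin 4 → ℤ, (2 : ℤ) ∣ bf M e f) (n : ℤ) (hn : ¬ (2 : ℤ) ∣ n)
    (x : Fin 4 → ℤ) (hx : (2 : ℤ) ^ 3 ∣ qf M x - n) : 256 ≤ NN M 2 n 3 := by
  have h2 : ∀ i j, (2 : ℤ) ∣ M i j + M j i := by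
    intro i j
    have h3 : bf M (Pi.single i 1 : Fin 4 → ℤ) (Pi.single j 1) = M i j + M j i := by
      simp [bf, Pi.single_apply, mul_add, Finset.sum_add_distrib]
    rw [← h3]
    exact hB _ _
  choose K hK using h2
  have hKs : ∀ i j, K i j = K j i := by
    intro i j
    have a := hK i j
    have b := hK j i
    omega
  have hbK : ∀ (x y : Fin 4 → ZMod 8), bf M x y = 2 * hf K x y := by
    intro x y
    have e1 : bf M x y = ∑ i, ∑ j, ((M i j + M j i : ℤ) : ZMod 8) * (x i * y j) := by
      have : ∑ i, ∑ j, ((M j i : ℤ) : ZMod 8) * (x i * y j)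
          = ∑ i, ∑ j, ((M i j : ℤ) : ZMod 8) * (y i * x j) := by
        rw [Finset.sum_comm]
        exact Finset.sum_congr rfl fun i _ => Finset.sum_congr rfl fun j _ => by ring
      simp only [bf, mul_add, Finset.sum_add_distrib, Int.cast_add, add_mul, this]
    rw [e1]
    simp only [hf, hK, Finset.mul_sum]
    exact Finset.sum_congr rfl fun i _ => Finset.sum_congr rfl fun j _ => by push_cast; ring
  have hKq : ∀ x : Fin 4 → ℤ, hf K x x = qf M x := by
    intro x
    have e1 : 2 * hf K x x = 2 * qf M x := by
      have hh := fun i j => hK i j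
      simp only [hf, qf, Fin.sum_univ_four, Int.cast_id]
      have a00 := hK 0 0
      have a01 := hK 0 1
      have a02 := hK 0 2
      have a03 := hK 0 3
      have a11 := hK 1 1
      have a12 := hK 1 2
      have a13 := hK 1 3
      have a22 := hK 2 2
      have a23 := hK 2 3
      have a33 := hK 3 3
      rw [hKs 1 0, hKs 2 0, hKs 3 0, hKs 2 1, hKs 3 1, hKs 3 2]
      linear_combination -(x 0 * x 0) * a00 - 2 * (x 0 * x 1) * a01 - 2 * (x 0 * x 2) * a02 - 2 * (x 0 * x 3) * a03 - (x 1 * x 1) * a11 - 2 * (x 1 * x 2) * a12 - 2 * (x 1 * x 3) * a13 - (x 2 * x 2) * a22 - 2 * (x 2 * x 3) * a23 - (x 3 * x 3) * a33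
    omega
  have hqx : qf M (cv (ZMod 8) x) = (n : ZMod 8) := by
    rw [qf_cv]
    exact (cast_eq_iff 2 3 _ _).2 hx
  have main := two_abstract (qf M) (hf K) ?_ ?_ ?_ ?_ ?_ (cv _ x) ?_
  · rw [hqx] at main
    exact main
  · intro x y
    rw [qf_add, hbK]
  · intro x y z
    simp only [hf, ← Finset.sum_add_distrib, Pi.add_apply]
    exact Finset.sum_congr rfl fun i _ => Finset.sum_congr rfl fun j _ => by ring
  · intro x c y
    simp only [hf, Finset.mul_sum, Pi.smul_apply, smul_eq_mul]
    exact Finset.sum_congr rfl fun i _ => Finset.sum_congr rfl fun j _ => by ring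
  · intro x y
    simp only [hf]
    rw [Finset.sum_comm]
    exact Finset.sum_congr rfl fun i _ => Finset.sum_congr rfl fun j _ => by rw [hKs]; ring
  · intro x
    obtain ⟨y, rfl⟩ := exists_lift _ x
    rw [qf_cv, ← hKq]
    simp [hf, cv]
  · rw [hqx, map_intCast]
    rcases zmod2 ((n : ℤ) : ZMod 2) with h | h
    · exact absurd ((ZMod.intCast_zmod_eq_zero_iff_dvd n 2).1 h) hn
    · exact h

end two

section reduction

open MvPolynomial in
theorem chev (p : ℕ) [hp : Fact p.Prime] (M : Matrix (Fin 4) (Fin 4) ℤ) (i : Fin 4) :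
    ∃ x : Fin 4 → ZMod p, x ≠ 0 ∧ qf M x = 0 ∧ x i = 0 := by
  classical
  let F : MvPolynomial (Fin 4) (ZMod p) := ∑ i, ∑ j, C ((M i j : ℤ) : ZMod p) * (X i * X j)
  have hF : F.totalDegree ≤ 2 := by
    refine (totalDegree_finsetSum _ _).trans (Finset.sup_le fun i _ => ?_)
    refine (totalDegree_finsetSum _ _).trans (Finset.sup_le fun j _ => ?_)
    refine (totalDegree_mul _ _).trans ?_
    rw [totalDegree_C, zero_add]
    refine (totalDegree_mul _ _).trans ?_
    rw [totalDegree_X, totalDegree_X]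
  have hev : ∀ x, eval x F = qf M x := by
    intro x
    simp [F, qf]
  have hd : F.totalDegree + (X i : MvPolynomial (Fin 4) (ZMod p)).totalDegree < Fintype.card (Fin 4) := by
    rw [totalDegree_X, Fintype.card_fin]; omega
  have := char_dvd_card_solutions_of_add_lt p hd
  by_contra hcon
  push Not at hcon
  have huniq : Fintype.card { x : Fin 4 → ZMod p // eval x F = 0 ∧ eval x (X i) = 0 } = 1 := by
    rw [Fintype.card_eq_one_iff]
    refine ⟨⟨0, by rw [hev, qf_zero]; simp⟩, ?_⟩
    rintro ⟨x, hx1, hx2⟩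
    rw [hev] at hx1
    rw [eval_X] at hx2
    by_contra hne
    refine hcon x ?_ hx1 hx2
    intro h0
    exact hne (Subtype.ext h0)
  rw [huniq] at this
  exact hp.out.one_lt.ne' (Nat.dvd_one.1 this)

/-- the zeros of the form modulo `p` in the anisotropic-modulo-radical case -/
def zeroSub (p : ℕ) [hp : Fact p.Prime] (M : Matrix (Fin 4) (Fin 4) ℤ)
    (hI : ∀ e f : Fin 4 → ℤ, (p : ℤ) ∣ qf M e → (p : ℤ) ∣ bf M e f) :
    Submodule (ZMod p) (Fin 4 → ZMod p) where
  carrier := {x | qf M x = 0}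
  zero_mem' := qf_zero M
  add_mem' := by
    intro a b ha hb
    obtain ⟨a, rfl⟩ := exists_lift _ a
    obtain ⟨b, rfl⟩ := exists_lift _ b
    change qf M _ = 0 at ha
    change qf M _ = 0 at hb
    change qf M _ = 0
    rw [qf_add, ha, hb, bf_cv]
    rw [qf_cv, ZMod.intCast_zmod_eq_zero_iff_dvd] at ha
    rw [(ZMod.intCast_zmod_eq_zero_iff_dvd _ p).2 (hI a b ha)]
    simp
  smul_mem' := by
    intro c x hx
    change qf M _ = 0 at hx
    change qf M _ = 0
    rw [qf_smul, hx, mul_zero]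

theorem cv_mem_zeroSub (p : ℕ) [hp : Fact p.Prime] (M : Matrix (Fin 4) (Fin 4) ℤ)
    (hI : ∀ e f : Fin 4 → ℤ, (p : ℤ) ∣ qf M e → (p : ℤ) ∣ bf M e f) (z : Fin 4 → ℤ) :
    cv _ z ∈ zeroSub p M hI ↔ (p : ℤ) ∣ qf M z := by
  change qf M _ = 0 ↔ _
  rw [qf_cv, ZMod.intCast_zmod_eq_zero_iff_dvd]

theorem card_quot (p : ℕ) [hp : Fact p.Prime] (M : Matrix (Fin 4) (Fin 4) ℤ)
    (hI : ∀ e f : Fin 4 → ℤ, (p : ℤ) ∣ qf M e → (p : ℤ) ∣ bf M e f) :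
    Nat.card ((Fin 4 → ZMod p) ⧸ zeroSub p M hI) ≤ p ^ 2 := by
  have h2 : 2 ≤ Module.finrank (ZMod p) (zeroSub p M hI) := by
    by_contra hlt
    have hle : Module.finrank (ZMod p) (zeroSub p M hI) ≤ 1 := by omega
    obtain ⟨v, hv⟩ := finrank_le_one_iff.1 hle
    obtain ⟨x, hx0, hx, -⟩ := chev p M 0
    obtain ⟨c, hc⟩ := hv ⟨x, hx⟩
    have hc' : c • (v : Fin 4 → ZMod p) = x := congrArg Subtype.val hc
    have hv0 : (v : Fin 4 → ZMod p) ≠ 0 := by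
      intro h; rw [h, smul_zero] at hc'; exact hx0 hc'.symm
    obtain ⟨i, hi⟩ := Function.ne_iff.1 hv0
    obtain ⟨y, hy0, hy, hyi⟩ := chev p M i
    obtain ⟨d, hd⟩ := hv ⟨y, hy⟩
    have hd' : d • (v : Fin 4 → ZMod p) = y := congrArg Subtype.val hd
    have := congrFun hd' i
    rw [hyi, Pi.smul_apply, smul_eq_mul] at this
    rcases mul_eq_zero.1 this with h | h
    · rw [h, zero_smul] at hd'; exact hy0 hd'.symm
    · exact hi h
  have h3 := (zeroSub p M hI).finrank_quotient_add_finrank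
  rw [Module.finrank_fin_fun] at h3
  rw [Module.natCard_eq_pow_finrank (K := ZMod p), Nat.card_zmod]
  exact Nat.pow_le_pow_right hp.out.pos (by omega)

theorem exists_param (p : ℤ) (hpz : p ≠ 0) (Λ : Submodule ℤ (Fin 4 → ℤ))
    (hmem : ∀ x : Fin 4 → ℤ, p • x ∈ Λ) :
    ∃ g : (Fin 4 → ℤ) →ₗ[ℤ] (Fin 4 → ℤ), Function.Injective g ∧
      ∀ z, z ∈ Λ ↔ ∃ y, g y = z := by
  let m : (Fin 4 → ℤ) →ₗ[ℤ] Λ := LinearMap.codRestrict Λ (p • LinearMap.id) (fun x => hmem x)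
  have hm : Function.Injective m := by
    intro a b hab
    have : p • a = p • b := congrArg Subtype.val hab
    exact smul_right_injective _ hpz this
  have r1 := LinearMap.finrank_le_finrank_of_injective hm
  have r2 := Submodule.finrank_le Λ
  rw [Module.finrank_fin_fun] at r1 r2
  obtain ⟨b⟩ : Nonempty (Module.Basis (Fin 4) ℤ Λ) :=
    ⟨Module.finBasisOfFinrankEq ℤ Λ (le_antisymm r2 r1)⟩
  refine ⟨Λ.subtype ∘ₗ b.equivFun.symm.toLinearMap, ?_, ?_⟩
  · exact (Submodule.injective_subtype Λ).comp b.equivFun.symm.injective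
  · intro z
    constructor
    · intro hz
      refine ⟨b.equivFun ⟨z, hz⟩, ?_⟩
      rw [LinearMap.comp_apply, LinearEquiv.coe_coe, LinearEquiv.symm_apply_apply]
      rfl
    · rintro ⟨y, rfl⟩
      exact (b.equivFun.symm y).2

/-- the sublattice on which the form is divisible by `p` -/
def subLat (p : ℕ) (M : Matrix (Fin 4) (Fin 4) ℤ)
    (hI : ∀ e f : Fin 4 → ℤ, (p : ℤ) ∣ qf M e → (p : ℤ) ∣ bf M e f) :
    Submodule ℤ (Fin 4 → ℤ) where
  carrier := {x | (p : ℤ) ∣ qf M x}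
  zero_mem' := by change (p : ℤ) ∣ qf M 0; rw [qf_zero]; exact dvd_zero _
  add_mem' := by
    intro a b ha hb
    change (p : ℤ) ∣ qf M (a + b)
    rw [qf_add]
    exact dvd_add (dvd_add ha (hI a b ha)) hb
  smul_mem' := by
    intro c x hx
    change (p : ℤ) ∣ qf M (c • x)
    rw [qf_smul]
    exact Dvd.dvd.mul_left hx _

theorem exists_basis_matrix (p : ℕ) [hp : Fact p.Prime] (M : Matrix (Fin 4) (Fin 4) ℤ)
    (hI : ∀ e f : Fin 4 → ℤ, (p : ℤ) ∣ qf M e → (p : ℤ) ∣ bf M e f) :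
    ∃ g : (Fin 4 → ℤ) →ₗ[ℤ] (Fin 4 → ℤ), Function.Injective g ∧
      ∀ z, (p : ℤ) ∣ qf M z ↔ ∃ y, g y = z := by
  refine exists_param p (by exact_mod_cast hp.out.ne_zero) (subLat p M hI) ?_
  intro x
  change (p : ℤ) ∣ qf M ((p : ℤ) • x)
  rw [qf_smul]
  exact Dvd.dvd.mul_right (dvd_pow_self _ two_ne_zero) _

theorem qf_comp (M : Matrix (Fin 4) (Fin 4) ℤ) (g : (Fin 4 → ℤ) →ₗ[ℤ] (Fin 4 → ℤ)) :
    ∃ M' : Matrix (Fin 4) (Fin 4) ℤ, ∀ x : Fin 4 → ℤ, qf M' x = qf M (g x) := by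
  let G := LinearMap.toMatrix' g
  refine ⟨fun a b => ∑ i, ∑ j, M i j * (G i a * G j b), fun x => ?_⟩
  have hg : ∀ i, g x i = ∑ a, G i a * x a := by
    intro i
    have : g x = G.mulVec x := (LinearMap.toMatrix'_mulVec g x).symm
    rw [this]; rfl
  simp only [qf, hg, Int.cast_id, Fin.sum_univ_four]
  ring

/-- the counting step: passing to the sublattice -/
theorem reduce_count (p : ℕ) [hp : Fact p.Prime] (M M₁ : Matrix (Fin 4) (Fin 4) ℤ)
    (hI : ∀ e f : Fin 4 → ℤ, (p : ℤ) ∣ qf M e → (p : ℤ) ∣ bf M e f)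
    (g : (Fin 4 → ℤ) →ₗ[ℤ] (Fin 4 → ℤ)) (hg : Function.Injective g)
    (hg2 : ∀ z, (p : ℤ) ∣ qf M z ↔ ∃ y, g y = z) (c a : ℕ) (n₁ : ℤ)
    (hq : ∀ y : Fin 4 → ℤ, qf M (g y) = p ^ c * qf M₁ y) :
    p ^ (4 * c) * NN M₁ p n₁ a ≤ p ^ 2 * NN M p (p ^ c * n₁) (a + c) := by
  classical
  rw [← NN_lift]
  choose l hl using exists_lift (p ^ (a + c))
  let σ : (Fin 4 → ZMod (p ^ (a + c))) → (Fin 4 → ZMod (p ^ (a + c))) := fun y => cv _ (g (l y))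
  refine Finset.card_le_mul_card_image_of_maps_to (f := σ) ?_ _ ?_
  · intro y hy
    have hy := (Finset.mem_filter.1 hy).2
    refine Finset.mem_filter.2 ⟨Finset.mem_univ _, ?_⟩
    rw [← hl y, redv_cv, qf_cv, cast_eq_iff] at hy
    change qf M (cv _ (g (l y))) = _
    rw [qf_cv, cast_eq_iff, hq, ← mul_sub, pow_add, mul_comm]
    exact mul_dvd_mul_left _ hy
  · intro b _
    set F := Finset.filter (fun y => σ y = b) (Finset.univ.filter fun x : Fin 4 → ZMod (p ^ (a + c)) =>
      qf M₁ (redv p a (a + c) (Nat.le_add_right _ _) x) = (n₁ : ZMod (p ^ a))) with hF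
    rcases F.eq_empty_or_nonempty with h0 | ⟨y₀, hy₀⟩
    · rw [h0]; simp
    have hσ : ∀ y ∈ F, σ y = b := fun y hy => (Finset.mem_filter.1 hy).2
    have hz : ∀ y, ∃ z : Fin 4 → ℤ, y ∈ F → g (l y) - g (l y₀) = ((p ^ (a + c) : ℕ) : ℤ) • z := by
      intro y
      by_cases hy : y ∈ F
      · obtain ⟨z, hz⟩ := (cv_eq_iff _ _ _).1 ((hσ y hy).trans (hσ y₀ hy₀).symm)
        exact ⟨z, fun _ => hz⟩
      · exact ⟨0, fun h => absurd h hy⟩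
    choose z hz using hz
    have hpz : (((p ^ (a + c) : ℕ) : ℤ)) ≠ 0 := by
      exact_mod_cast pow_ne_zero _ hp.out.ne_zero
    refine le_trans ?_ (card_quot p M hI)
    have : Fintype ((Fin 4 → ZMod p) ⧸ zeroSub p M hI) := Fintype.ofFinite _
    rw [Nat.card_eq_fintype_card, ← Finset.card_univ]
    refine Finset.card_le_card_of_injOn (fun y => Submodule.Quotient.mk (cv (ZMod p) (z y)))
      (fun _ _ => Finset.mem_coe.2 (Finset.mem_univ _)) ?_
    intro y hy y' hy' hyy
    simp only at hyy
    rw [Submodule.Quotient.eq, ← cv_sub, cv_mem_zeroSub, hg2] at hyy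
    obtain ⟨w, hw⟩ := hyy
    have e1 := hz y hy
    have e2 := hz y' hy'
    have e3 : g (l y - l y' - ((p ^ (a + c) : ℕ) : ℤ) • w) = 0 := by
      rw [map_sub, map_sub, map_smul, hw, smul_sub, ← e1, ← e2]
      abel
    have e4 : l y - l y' = ((p ^ (a + c) : ℕ) : ℤ) • w := by
      have := hg (e3.trans (map_zero g).symm)
      exact sub_eq_zero.1 this
    rw [← hl y, ← hl y']
    exact (cv_eq_iff _ _ _).2 ⟨w, e4⟩

end reduction

section main

theorem NN_iter (M : Matrix (Fin 4) (Fin 4) ℤ) (p : ℕ) [hp : Fact p.Prime] (n u : ℤ) (v k j : ℕ)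
    (hn : n = p ^ v * u) (hu : ¬ (p : ℤ) ∣ u) (hk : v + 3 ≤ k) :
    NN M p n (k + j) = p ^ (3 * j) * NN M p n k := by
  induction j with
  | zero => simp
  | succ j ih =>
    rw [← add_assoc, NN_step M p n u v (k + j) hn hu (by omega), ih]
    ring

theorem main_bound (p : ℕ) [hp : Fact p.Prime] (v : ℕ) :
    ∀ (M : Matrix (Fin 4) (Fin 4) ℤ) (u n : ℤ) (k : ℕ), (∃ e : Fin 4 → ℤ, ¬ (p : ℤ) ∣ qf M e) →
      n = p ^ v * u → ¬ (p : ℤ) ∣ u → v + 3 ≤ k → (∃ x : Fin 4 → ℤ, (p : ℤ) ^ k ∣ qf M x - n) →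
      (p - 1) * p ^ (3 * k) ≤ NN M p n k * p ^ (v + 1) := by
  induction v using Nat.strong_induction_on with
  | _ v IH =>
  intro M u n k hprim hn hu hk hx
  obtain ⟨x, hx⟩ := hx
  have hpp := Nat.prime_iff_prime_int.1 hp.out
  have hpz : (p : ℤ) ≠ 0 := hpp.ne_zero
  have weak : (p - 1) * p ^ (3 * k) ≤ NN M p n k * p →
      (p - 1) * p ^ (3 * k) ≤ NN M p n k * p ^ (v + 1) := fun h =>
    h.trans (Nat.mul_le_mul_left _ (Nat.le_self_pow (by omega) p))
  by_cases hI : ∀ e f : Fin 4 → ℤ, (p : ℤ) ∣ qf M e → (p : ℤ) ∣ bf M e f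
  swap
  · push Not at hI
    obtain ⟨e, f, he, hef⟩ := hI
    exact weak (caseI p M k (by omega) e f hef he n)
  by_cases hJ : ∃ f, ¬ (p : ℤ) ∣ bf M x f
  · obtain ⟨f, hf⟩ := hJ
    exact weak (caseJ p M k (by omega) hI n x f hx hf)
  push Not at hJ
  have hxp : (p : ℤ) ∣ qf M x - n := (dvd_pow_self _ (by omega)).trans hx
  rcases Nat.eq_zero_or_pos v with hv | hv
  · subst hv
    have hnu : ¬ (p : ℤ) ∣ n := by rw [hn]; simpa using hu
    have hqx : ¬ (p : ℤ) ∣ qf M x := fun h => hnu (by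
      have := dvd_sub h hxp
      simpa using this)
    have h2 : p = 2 := by
      have := hJ x
      rw [bf_self] at this
      rcases hpp.dvd_or_dvd this with h | h
      · have : p ∣ 2 := by exact_mod_cast h
        exact (Nat.prime_dvd_prime_iff_eq hp.out Nat.prime_two).1 this
      · exact absurd h hqx
    subst h2
    have hB : ∀ e f : Fin 4 → ℤ, (2 : ℤ) ∣ bf M e f := by
      intro e f
      by_contra hcon
      have he : ¬ (2 : ℤ) ∣ qf M e := fun h => hcon (hI e f h)
      have hex : (2 : ℤ) ∣ qf M (e + x) := by
        rw [qf_add, bf_comm]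
        have := hJ e
        push_cast at this hqx
        omega
      have h3 := hI (e + x) f hex
      rw [bf_comm, bf_add, bf_comm, bf_comm M f x] at h3
      have := hJ f
      push_cast at this h3
      omega
    have h256 := case_two M hB n hnu x ((pow_dvd_pow _ (by omega)).trans hx)
    obtain ⟨j, rfl⟩ := Nat.exists_eq_add_of_le hk
    rw [zero_add, NN_iter M 2 n u 0 3 j hn hu (by omega), mul_add, pow_add]
    calc (2 - 1) * (2 ^ (3 * 3) * 2 ^ (3 * j)) = 2 ^ (3 * j) * 256 * 2 := by norm_num; ring
      _ ≤ 2 ^ (3 * j) * NN M 2 n 3 * 2 ^ (0 + 1) := by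
        simpa using Nat.mul_le_mul_right 2 (Nat.mul_le_mul_left (2 ^ (3 * j)) h256)
  · have hpn : (p : ℤ) ∣ n := by
      rw [hn]; exact Dvd.dvd.mul_right (dvd_pow_self _ (by omega)) _
    have hqx : (p : ℤ) ∣ qf M x := by
      have := dvd_add hxp hpn
      simpa using this
    obtain ⟨g, hg, hg2⟩ := exists_basis_matrix p M hI
    obtain ⟨y, rfl⟩ := (hg2 x).1 hqx
    have red : ∀ (c : ℕ) (M₁ : Matrix (Fin 4) (Fin 4) ℤ), 1 ≤ c → c ≤ v →
        (∀ y : Fin 4 → ℤ, qf M (g y) = p ^ c * qf M₁ y) →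
        (∃ e : Fin 4 → ℤ, ¬ (p : ℤ) ∣ qf M₁ e) →
        (p - 1) * p ^ (3 * k) ≤ NN M p n k * p ^ (v + 1) := by
      intro c M₁ hc hcv hq hprim₁
      obtain ⟨w, rfl⟩ := Nat.exists_eq_add_of_le' hcv
      obtain ⟨a, rfl⟩ := Nat.exists_eq_add_of_le' (show c ≤ k by omega)
      have hn₁ : n = p ^ c * (p ^ w * u) := by rw [hn]; ring
      have i1 := IH w (by omega) M₁ u (p ^ w * u) a hprim₁ rfl hu (by omega) ⟨y, by
        rw [hq, hn₁, ← mul_sub, add_comm, pow_add] at hx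
        exact (mul_dvd_mul_iff_left (pow_ne_zero c hpz)).1 hx⟩
      have i2 := reduce_count p M M₁ hI g hg hg2 c a (p ^ w * u) hq
      rw [← hn₁] at i2
      have hpos : 0 < p ^ 2 := pow_pos hp.out.pos _
      apply Nat.le_of_mul_le_mul_left _ hpos
      calc p ^ 2 * ((p - 1) * p ^ (3 * (a + c)))
          ≤ p ^ (2 * c) * ((p - 1) * p ^ (3 * (a + c))) :=
            Nat.mul_le_mul_right _ (Nat.pow_le_pow_right hp.out.pos (by omega))
        _ = p ^ (5 * c) * ((p - 1) * p ^ (3 * a)) := by ring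
        _ ≤ p ^ (5 * c) * (NN M₁ p (p ^ w * u) a * p ^ (w + 1)) := Nat.mul_le_mul_left _ i1
        _ = p ^ (c + w + 1) * (p ^ (4 * c) * NN M₁ p (p ^ w * u) a) := by ring
        _ ≤ p ^ (c + w + 1) * (p ^ 2 * NN M p n (a + c)) := Nat.mul_le_mul_left _ i2
        _ = _ := by ring
    obtain ⟨M', hM'⟩ := qf_comp M g
    obtain ⟨M₁, hM₁⟩ := qf_div M' p (fun z => by rw [hM']; exact (hg2 _).2 ⟨z, rfl⟩)
    by_cases hp1 : ∃ e : Fin 4 → ℤ, ¬ (p : ℤ) ∣ qf M₁ e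
    · exact red 1 M₁ le_rfl hv (fun z => by rw [← hM', hM₁, pow_one]) hp1
    · push Not at hp1
      obtain ⟨M₂, hM₂⟩ := qf_div M₁ p hp1
      have hq2 : ∀ z : Fin 4 → ℤ, qf M (g z) = p ^ 2 * qf M₂ z := fun z => by
        rw [← hM', hM₁, hM₂]; ring
      refine red 2 M₂ (by omega) ?_ hq2 ?_
      · by_contra hlt
        have hv1 : v = 1 := by omega
        subst hv1
        have h2 : (p : ℤ) ^ 2 ∣ qf M (g y) - n := (pow_dvd_pow _ (by omega)).trans hx
        rw [hq2] at h2
        have h3 := dvd_sub (dvd_mul_right ((p : ℤ) ^ 2) (qf M₂ y)) h2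
        rw [sub_sub_cancel, hn, pow_one, pow_two] at h3
        exact hu ((mul_dvd_mul_iff_left hpz).1 h3)
      · obtain ⟨e, he⟩ := hprim
        have : (p : ℤ) ∣ qf M ((p : ℤ) • e) := by
          rw [qf_smul]
          exact Dvd.dvd.mul_right (dvd_pow_self _ two_ne_zero) _
        obtain ⟨z, hz⟩ := (hg2 _).1 this
        refine ⟨z, fun hdiv => he ?_⟩
        have h4 := hq2 z
        rw [hz, qf_smul] at h4
        rw [mul_left_cancel₀ (pow_ne_zero 2 hpz) h4]
        exact hdiv

/-- upper triangular matrix of the form -/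
def triM (A : Matrix (Fin 4) (Fin 4) ℤ) : Matrix (Fin 4) (Fin 4) ℤ :=
  fun i j => if i = j then A i i / 2 else if i < j then A i j else 0

theorem Qval_eq {R : Type*} [CommRing R] (A : Matrix (Fin 4) (Fin 4) ℤ) (x : Fin 4 → R) :
    Qval A x = qf (triM A) x := by
  have e0 : Finset.Ioi (0 : Fin 4) = {1, 2, 3} := by decide
  have e1 : Finset.Ioi (1 : Fin 4) = {2, 3} := by decide
  have e2 : Finset.Ioi (2 : Fin 4) = {3} := by decide
  have e3 : Finset.Ioi (3 : Fin 4) = ∅ := by decide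
  simp only [Qval, qf, triM, Fin.sum_univ_four, e0, e1, e2, e3]
  simp
  ring

theorem prim_of (A : Matrix (Fin 4) (Fin 4) ℤ) (p : ℕ) [hp : Fact p.Prime] (hA : IsGram A)
    (hprim : IsPrimitiveQF A) : ∃ e : Fin 4 → ℤ, ¬ (p : ℤ) ∣ qf (triM A) e := by
  by_contra hcon
  push Not at hcon
  have hpp := Nat.prime_iff_prime_int.1 hp.out
  refine hpp.not_isUnit (hprim p ?_ ?_)
  · intro i
    have := hcon (Pi.single i 1)
    simpa [qf, triM, Pi.single_apply] using this
  · have key : ∀ i j, i < j → (p : ℤ) ∣ A i j := by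
      intro i j hij
      have e := qf_add (triM A) (Pi.single i 1 : Fin 4 → ℤ) (Pi.single j 1)
      have h3 : bf (triM A) (Pi.single i 1 : Fin 4 → ℤ) (Pi.single j 1) = A i j := by
        simp [bf, triM, Pi.single_apply, mul_add, Finset.sum_add_distrib, hij.ne, hij.ne', hij, hij.not_gt]
      rw [h3] at e
      have : A i j = qf (triM A) (Pi.single i 1 + Pi.single j 1 : Fin 4 → ℤ)
          - qf (triM A) (Pi.single i 1 : Fin 4 → ℤ) - qf (triM A) (Pi.single j 1 : Fin 4 → ℤ) := by
        rw [e]; ring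
      rw [this]
      exact dvd_sub (dvd_sub (hcon _) (hcon _)) (hcon _)
    intro i j hij
    rcases lt_or_gt_of_ne hij with h | h
    · exact key i j h
    · rw [← hA.1.apply i j]; exact key j i h

theorem localCount_eq (A : Matrix (Fin 4) (Fin 4) ℤ) (p n k : ℕ) [hp : Fact p.Prime] :
    localCount A p n k = NN (triM A) p n k := by
  rw [localCount, NN, Nat.card_eq_fintype_card, Fintype.card_subtype]
  simp only [Qval_eq, Int.cast_natCast]

end main

/-- Lemma 2, part 3 (general bound): if `n` is represented over `ℤ_p` then
`β_p(Q;n) ≥ (1 - 1/p) · p^(-ord_p(n))`. -/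
theorem local_density_general
    (A : Matrix (Fin 4) (Fin 4) ℤ) (p n : ℕ) [Fact p.Prime]
    (hA : IsGram A) (hprim : IsPrimitiveQF A) (hpd : PosDefQF A) (hn : 0 < n)
    (h : ∃ x : Fin 4 → ℤ_[p], Qval A x = (n : ℤ_[p])) :
    DensityBound A p n
      ((1 - 1 / (p : ℝ)) * (p : ℝ) ^ (-(n.factorization p : ℝ))) := by
  have hp : p.Prime := Fact.out
  set v := n.factorization p with hv
  have hnu : (n : ℤ) = (p : ℤ) ^ v * ((n / p ^ v : ℕ) : ℤ) := by
    exact_mod_cast (Nat.ordProj_mul_ordCompl_eq_self n p).symm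
  have hu : ¬ (p : ℤ) ∣ ((n / p ^ v : ℕ) : ℤ) := by
    exact_mod_cast Nat.not_dvd_ordCompl hp hn.ne'
  have hpR : (0 : ℝ) < p := by exact_mod_cast hp.pos
  set k := v + 3 with hk
  have hrep : ∃ x : Fin 4 → ℤ, (p : ℤ) ^ k ∣ qf (triM A) x - n := by
    obtain ⟨x, hx⟩ := h
    obtain ⟨y, hy⟩ := exists_lift _ (fun i => PadicInt.toZModPow k (x i))
    refine ⟨y, ?_⟩
    rw [← cast_eq_iff, ← qf_cv, hy, ← map_qf, ← Qval_eq, hx]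
    simp
  have hb := main_bound p v (triM A) _ n k (prim_of A p hA hprim) hnu hu le_rfl hrep
  refine ⟨(NN (triM A) p n k : ℝ) / (p : ℝ) ^ (3 * k), ?_, ?_⟩
  · refine tendsto_const_nhds.congr' ?_
    filter_upwards [Filter.eventually_ge_atTop k] with m hm
    obtain ⟨j, rfl⟩ := Nat.exists_eq_add_of_le hm
    rw [localCount_eq, NN_iter (triM A) p n _ v k j hnu hu le_rfl]
    push_cast
    have e : (p : ℝ) ^ (3 * (k + j)) = (p : ℝ) ^ (3 * k) * (p : ℝ) ^ (3 * j) := by ring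
    rw [e, mul_comm ((p : ℝ) ^ (3 * j)), mul_div_mul_right _ _ (by positivity)]
  · have hb' : ((p : ℝ) - 1) * (p : ℝ) ^ (3 * k) ≤ NN (triM A) p n k * (p : ℝ) ^ (v + 1) := by
      have := (Nat.cast_le (α := ℝ)).2 hb
      push_cast [Nat.cast_sub hp.one_lt.le] at this
      exact this
    rw [Real.rpow_neg hpR.le, Real.rpow_natCast, le_div_iff₀ (by positivity)]
    have e : (1 - 1 / (p : ℝ)) * ((p : ℝ) ^ v)⁻¹ * (p : ℝ) ^ (3 * k)
        = (((p : ℝ) - 1) * (p : ℝ) ^ (3 * k)) / (p : ℝ) ^ (v + 1) := by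
      field_simp
      ring
    rw [e, div_le_iff₀ (by positivity)]
    exact hb'
end
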